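/- The rook partition monoid RP_n has monoid presentation ⟨S ∪ E ∪ Q ∪ O | (R18)–(R43)⟩ via Ψ; that is, the monoid homomorphism Ψ : (S∪E∪Q∪O)* → RP_n is surjective and its kernel congruence {(u,v) : uΨ = vΨ} equals the congruence ≈ generated by the relations (R18)–(R43). -/

import Mathlib

/-!
Colour the points of a rook partition by two colours, constantly on blocks and with `false` on all
rook dots. The pairs (colouring of the upper row, colouring of the lower row) arising in this way
form a binary relation on colourings of `[n]`; passing to this relation is an injective monoid
homomorphism `nu` (`nu_mul`, `nu_injective`). It turns `ō_i` into the relation `t̄_{i,none}`, where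
`none` is an additional point whose colour is always `false`: rook dots behave as points joined to
this point, so `O` and `Q` can be treated together.

For the kernel, let `M` be the monoid presented by the relations. The Coxeter presentation of the
symmetric group (`exists_hom`) gives a homomorphism `φ` from permutations to `M`, and conjugating
`q_1` by permutations gives elements `t_ij`. As the symmetric group acts transitively on tuples of
distinct indices, each defining relation propagates to all indices, which makes `M` a `RookSys`
(`exists_sys`). In such a monoid every product of generators has a form `X * φ σ * W * Y` with
`X, Y` products of elements `t_pq` and `W` a product of elements `e_i` (`isForm_mul_e` is the main
case), and the form can be chosen reduced: the points outside the support of `W` represent distinct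
classes of `X` and of `Y`, none of them that of `none` (`exists_reduced`). The relation of a reduced
form determines the equivalences belonging to `X` and `Y`, hence `X` and `Y` themselves, and it
determines `σ` and `W` up to permutations within the classes, which `X` and `Y` absorb (`form_inj`).
So two words with the same image have the same class in `M`.

For surjectivity, the relation of any `α` is a product of relations of extended generators
(`nu_mem`).
-/

namespace RookPaper

/-- Reflexive–symmetric–transitive closure of a relation
(connectivity by paths in a graph). -/
inductive RClosure {V : Type*} (E : V → V → Prop) : V → V → Prop
  | base {x y : V} : E x y → RClosure E x y
  | refl (x : V) : RClosure E x x
  | symm {x y : V} : RClosure E x y → RClosure E y x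
  | trans {x y z : V} : RClosure E x y → RClosure E y z → RClosure E x z

/-- The 2n points `1,…,n` (`Sum.inl`) and `1',…,n'` (`Sum.inr`). -/
abbrev Pt (n : ℕ) := Fin n ⊕ Fin n

/-- A rook partition of degree `n`, encoded as a partial equivalence relation on the
`2n` points: its blocks are the equivalence classes of `rel`, and the rook dots are the
points `x` with `¬ rel x x`. -/
structure RP (n : ℕ) where
  rel : Pt n → Pt n → Prop
  symm : ∀ {x y : Pt n}, rel x y → rel y x
  trans : ∀ {x y z : Pt n}, rel x y → rel y z → rel x z

/-- The underlying index in `[n]` of a point (`i` and `i'` both have index `i`). -/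
def idx {n : ℕ} : Pt n → Fin n := Sum.elim id id

/-- For `A ⊆ [n]`, the corresponding set of upper points. -/
def upSet {n : ℕ} (A : Set (Fin n)) : Set (Pt n) := Sum.inl '' A

/-- For `B ⊆ [n]`, the set `B' = {b' : b ∈ B}` of lower points. -/
def dnSet {n : ℕ} (B : Set (Fin n)) : Set (Pt n) := Sum.inr '' B

/-- `x` is a rook dot of `α`. -/
def RP.IsRookDot {n : ℕ} (α : RP n) (x : Pt n) : Prop := ¬ α.rel x x

/-- `α` has no rook dots, i.e. `α` lies in the partition monoid `P_n`. -/
def RP.NoDots {n : ℕ} (α : RP n) : Prop := ∀ x, α.rel x x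

/-- `B` is a block of `α`. -/
def RP.IsBlock {n : ℕ} (α : RP n) (B : Set (Pt n)) : Prop :=
  ∃ x, α.rel x x ∧ B = {y | α.rel x y}

/-- The identity rook partition, with blocks `{i,i'}`. -/
instance {n : ℕ} : One (RP n) :=
  ⟨{ rel := fun x y => idx x = idx y
     symm := fun h => Eq.symm h
     trans := fun h h' => Eq.trans h h' }⟩

/-! The product graph `Γ(α,β)` lives on three rows of `n` vertices. -/

abbrev V3 (n : ℕ) := Fin n ⊕ Pt n

def vTop {n : ℕ} (i : Fin n) : V3 n := Sum.inl i
def vMid {n : ℕ} (i : Fin n) : V3 n := Sum.inr (Sum.inl i)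
def vBot {n : ℕ} (i : Fin n) : V3 n := Sum.inr (Sum.inr i)

/-- `α` occupies the top and middle rows. -/
def embA {n : ℕ} : Pt n → V3 n := Sum.elim vTop vMid
/-- `β` occupies the middle and bottom rows. -/
def embB {n : ℕ} : Pt n → V3 n := Sum.elim vMid vBot
/-- The product `αβ` lives on the top and bottom rows. -/
def embOut {n : ℕ} : Pt n → V3 n := Sum.elim vTop vBot

/-- The edges of the product graph `Γ(α,β)`. -/
def pgEdge {n : ℕ} (α β : RP n) (x y : V3 n) : Prop :=
  (∃ a b : Pt n, α.rel a b ∧ x = embA a ∧ y = embA b) ∨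
  (∃ a b : Pt n, β.rel a b ∧ x = embB a ∧ y = embB b)

/-- Connectivity (by a possibly empty path) in the product graph `Γ(α,β)`. -/
def pgConn {n : ℕ} (α β : RP n) : V3 n → V3 n → Prop :=
  RClosure (pgEdge α β)

/-- The white vertices of `Γ(α,β)`: a top vertex is white if it is a rook dot of `α`,
a bottom vertex is white if it is a rook dot of `β`, and a middle vertex is white if it is
a rook dot of `α` (as a lower point) or of `β` (as an upper point). -/
def pgWhite {n : ℕ} (α β : RP n) (v : V3 n) : Prop :=
  (∃ i, v = vTop i ∧ ¬ α.rel (Sum.inl i) (Sum.inl i)) ∨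
  (∃ i, v = vMid i ∧ (¬ α.rel (Sum.inr i) (Sum.inr i) ∨ ¬ β.rel (Sum.inl i) (Sum.inl i))) ∨
  (∃ i, v = vBot i ∧ ¬ β.rel (Sum.inr i) (Sum.inr i))

/-- The product of two rook partitions: a point of `αβ` is a rook dot iff it is connected
to a white vertex of `Γ(α,β)`, and two points are in the same block of `αβ` iff they are
connected in `Γ(α,β)` (and are not rook dots). -/
instance {n : ℕ} : Mul (RP n) :=
  ⟨fun α β =>
    { rel := fun x y =>
        pgConn α β (embOut x) (embOut y) ∧
          ∀ w, pgWhite α β w → ¬ pgConn α β (embOut x) w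
      symm := by
        intro x y h
        exact ⟨RClosure.symm h.1, fun w hw hc => h.2 w hw (RClosure.trans h.1 hc)⟩
      trans := by
        intro x y z h h'
        exact ⟨RClosure.trans h.1 h'.1, h.2⟩ }⟩

/-- The rook partition corresponding to a permutation `σ`: blocks `{i, (σ i)'}`. -/
def permRP {n : ℕ} (σ : Equiv.Perm (Fin n)) : RP n where
  rel x y := Sum.elim (fun i => σ i) (fun i => i) x = Sum.elim (fun i => σ i) (fun i => i) y
  symm := fun h => Eq.symm h
  trans := fun h h' => Eq.trans h h'

/-- `α` lies in the copy of the symmetric group `S_n` inside `RP_n`. -/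
def RP.IsPermDiag {n : ℕ} (α : RP n) : Prop := ∃ σ : Equiv.Perm (Fin n), α = permRP σ

/-- The generator `ē_i` : blocks `{j,j'}` for `j ≠ i`, and singleton blocks `{i}`, `{i'}`. -/
def ebar {n : ℕ} (i : Fin n) : RP n where
  rel x y := x = y ∨ (idx x = idx y ∧ idx x ≠ i)
  symm := by
    rintro x y (rfl | ⟨h1, h2⟩)
    · exact Or.inl rfl
    · exact Or.inr ⟨h1.symm, h1 ▸ h2⟩
  trans := by
    rintro x y z (rfl | ⟨h1, h2⟩) h
    · exact h
    · rcases h with rfl | ⟨h3, h4⟩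
      · exact Or.inr ⟨h1, h2⟩
      · exact Or.inr ⟨h1.trans h3, h2⟩

/-- The generator `t̄_ij` (for `i ≠ j`): blocks `{k,k'}` for `k ∉ {i,j}`, and `{i,j,i',j'}`. -/
def tbar {n : ℕ} (i j : Fin n) : RP n where
  rel x y := idx x = idx y ∨ ((idx x = i ∨ idx x = j) ∧ (idx y = i ∨ idx y = j))
  symm := by
    rintro x y (h | ⟨h1, h2⟩)
    · exact Or.inl h.symm
    · exact Or.inr ⟨h2, h1⟩
  trans := by
    rintro x y z hxy hyz
    rcases hxy with h | ⟨h1, h2⟩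
    · rcases hyz with h' | ⟨h3, h4⟩
      · exact Or.inl (h.trans h')
      · refine Or.inr ⟨?_, h4⟩
        rw [h]; exact h3
    · rcases hyz with h' | ⟨h3, h4⟩
      · refine Or.inr ⟨h1, ?_⟩
        rw [← h']; exact h2
      · exact Or.inr ⟨h1, h4⟩

/-- `ō_A` for a subset `A ⊆ [n]`: rook dots at all points of `A ∪ A'`, blocks `{j,j'}` for
`j ∉ A`. -/
def obarS {n : ℕ} (A : Set (Fin n)) : RP n where
  rel x y := idx x = idx y ∧ idx x ∉ A
  symm := by
    rintro x y ⟨h1, h2⟩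
    exact ⟨h1.symm, h1 ▸ h2⟩
  trans := by
    rintro x y z ⟨h1, h2⟩ ⟨h3, h4⟩
    exact ⟨h1.trans h3, h2⟩

/-- The generator `ō_i`: rook dots `i` and `i'`, blocks `{j,j'}` for `j ≠ i`. -/
def obar {n : ℕ} (i : Fin n) : RP n := obarS {i}

/-- For an index `i` of a simple transposition (`1 ≤ i ≤ n-1`, zero-based `Fin (n-1)`),
the smaller of the two swapped points. -/
def lo {n : ℕ} (i : Fin (n - 1)) : Fin n := ⟨i.val, by have := i.isLt; omega⟩
/-- The larger of the two swapped points. -/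
def hi {n : ℕ} (i : Fin (n - 1)) : Fin n := ⟨i.val + 1, by have := i.isLt; omega⟩

/-- The generator `s̄_i`: the simple transposition with blocks `{i,(i+1)'}`, `{i+1,i'}`,
and `{j,j'}` for other `j`. -/
def sbar {n : ℕ} (i : Fin (n - 1)) : RP n := permRP (Equiv.swap (lo i) (hi i))

/-- The generator `q̄_i = t̄_{i,i+1}`. -/
def qbar {n : ℕ} (i : Fin (n - 1)) : RP n := tbar (lo i) (hi i)

/-- Membership in the subsemigroup generated by a subset `X`. -/
inductive SgGen {M : Type*} [Mul M] (X : Set M) : M → Prop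
  | incl {x : M} : x ∈ X → SgGen X x
  | mul {a b : M} : SgGen X a → SgGen X b → SgGen X (a * b)

/-- Membership in the submonoid generated by a subset `X`. -/
inductive MonGen {M : Type*} [Mul M] [One M] (X : Set M) : M → Prop
  | one : MonGen X 1
  | incl {x : M} : x ∈ X → MonGen X x
  | mul {a b : M} : MonGen X a → MonGen X b → MonGen X (a * b)

/-- Evaluation of a word under a map on the letters (the product, in order, of the images
of the letters; the empty word evaluates to `1`). -/
def evalWord {X M : Type*} [Mul M] [One M] (f : X → M) : List X → M
  | [] => 1
  | [x] => f x
  | x :: y :: w => f x * evalWord f (y :: w)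

/-- The congruence on the free monoid of words (with product = concatenation) generated
by a set of pairs `R`.  Restricted to nonempty words it is the congruence on the free
semigroup generated by `R`. -/
inductive CongGen {X : Type*} (R : List X → List X → Prop) : List X → List X → Prop
  | rel {u v : List X} : R u v → CongGen R u v
  | refl (u : List X) : CongGen R u u
  | symm {u v : List X} : CongGen R u v → CongGen R v u
  | trans {u v w : List X} : CongGen R u v → CongGen R v w → CongGen R u w
  | mul {u v u' v' : List X} : CongGen R u v → CongGen R u' v' → CongGen R (u ++ u') (v ++ v')


/-! ## The alphabet E ∪ T ∪ O and the relations (R1)–(R17) -/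

/-- The alphabet `E ∪ T ∪ O`: letters `e_i` (`i ∈ [n]`), `t_ij` (`1 ≤ i < j ≤ n`,
with the convention `t_ij = t_ji`), and `o_i` (`i ∈ [n]`). -/
inductive ETO (n : ℕ) : Type
  | e : Fin n → ETO n
  | t : (i j : Fin n) → i < j → ETO n
  | o : Fin n → ETO n

/-- The letter `t_ij = t_ji`, for distinct `i, j`. -/
def tg {n : ℕ} (i j : Fin n) (h : i ≠ j) : ETO n :=
  if hlt : i < j then ETO.t i j hlt else ETO.t j i (h.symm.lt_of_le (not_lt.mp hlt))

/-- The letter `t_ij` when `i ≠ j`, and the empty word when `i = j`. -/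
def tgd {n : ℕ} (i j : Fin n) : List (ETO n) :=
  if h : i = j then [] else [tg i j h]

/-- `x` is a letter of `E ∪ T`. -/
def ETO.isET {n : ℕ} : ETO n → Prop
  | .o _ => False
  | _ => True

/-- `x` is a letter of `O`. -/
def ETO.isO {n : ℕ} : ETO n → Prop
  | .o _ => True
  | _ => False

/-- The relations (R1)–(R17). -/
inductive RelETO (n : ℕ) : List (ETO n) → List (ETO n) → Prop
  | r1 (i : Fin n) : RelETO n [.e i, .e i] [.e i]
  | r2 (i j : Fin n) (h : i ≠ j) : RelETO n [.e i, .e j] [.e j, .e i]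
  | r3 (i j : Fin n) (h : i ≠ j) : RelETO n [tg i j h, tg i j h] [tg i j h]
  | r4 (i j k l : Fin n) (hij : i ≠ j) (hkl : k ≠ l) :
      RelETO n [tg i j hij, tg k l hkl] [tg k l hkl, tg i j hij]
  | r5 (i j k : Fin n) (hij : i ≠ j) (hjk : j ≠ k) (hik : i ≠ k) :
      RelETO n [tg i j hij, tg j k hjk] [tg j k hjk, tg k i hik.symm]
  | r6 (i j k : Fin n) (hij : i ≠ j) (hki : k ≠ i) (hkj : k ≠ j) :
      RelETO n [tg i j hij, .e k] [.e k, tg i j hij]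
  | r7 (i j k : Fin n) (hij : i ≠ j) (hk : k = i ∨ k = j) :
      RelETO n [tg i j hij, .e k, tg i j hij] [tg i j hij]
  | r8 (i j k : Fin n) (hij : i ≠ j) (hk : k = i ∨ k = j) :
      RelETO n [.e k, tg i j hij, .e k] [.e k]
  | r9 (i j k : Fin n) (hij : i ≠ j) (hjk : j ≠ k) (hik : i ≠ k) :
      RelETO n [.e k, tg k i hik.symm, .e i, tg i j hij, .e j, tg j k hjk, .e k]
               [.e k, tg k j hjk.symm, .e j, tg j i hij.symm, .e i, tg i k hik, .e k]
  | r10 (i j k l : Fin n) (hij : i ≠ j) (hik : i ≠ k) (hil : i ≠ l)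
        (hjk : j ≠ k) (hjl : j ≠ l) (hkl : k ≠ l) :
      RelETO n [.e k, tg k i hik.symm, .e i, tg i j hij, .e j, tg j l hjl, .e l,
                  tg l k hkl.symm, .e k]
               [.e k, tg k l hkl, .e l, tg l i hil.symm, .e i, tg i j hij, .e j,
                  tg j k hjk, .e k]
  | r11 (i : Fin n) : RelETO n [.o i, .o i] [.o i]
  | r12 (i j : Fin n) (h : i ≠ j) : RelETO n [.o i, .o j] [.o j, .o i]
  | r13 (i j : Fin n) (h : i ≠ j) : RelETO n [.o i, .e j] [.e j, .o i]
  | r14 (i : Fin n) : RelETO n [.o i, .e i, .o i] [.o i]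
  | r15 (i : Fin n) : RelETO n [.e i, .o i, .e i] [.e i]
  | r16 (i j k : Fin n) (hij : i ≠ j) : RelETO n [tg i j hij, .o k] [.o k, tg i j hij]
  | r17a (i j : Fin n) (h : i ≠ j) : RelETO n [tg i j h, .o i] [.o i, .o j]
  | r17b (i j : Fin n) (h : i ≠ j) : RelETO n [tg i j h, .o j] [.o i, .o j]

/-- The map `Φ` on letters. -/
def phiLetter {n : ℕ} : ETO n → RP n
  | .e i => ebar i
  | .t i j _ => tbar i j
  | .o i => obar i

/-- The homomorphism `Φ : (E ∪ T ∪ O)⁺ → RP_n`. -/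
def PhiETO {n : ℕ} : List (ETO n) → RP n := evalWord phiLetter

/-- For `A = {i₁ < ⋯ < i_k} ⊆ [n]`, the word `o_A = o_{i₁} ⋯ o_{i_k}`. -/
def oWord {n : ℕ} (A : Finset (Fin n)) : List (ETO n) :=
  (A.sort (· ≤ ·)).map ETO.o

/-- The chain of `t`-letters along consecutive members of a list. -/
def tChain {n : ℕ} : List (Fin n) → List (ETO n)
  | a :: b :: rest => tgd a b ++ tChain (b :: rest)
  | _ => []

/-- For `A = {i₁ < ⋯ < i_k} ⊆ [n]`, the word `t_A = t_{i₁i₂} t_{i₂i₃} ⋯ t_{i_{k-1}i_k}`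
(the empty word if `|A| ≤ 1`). -/
def tWord {n : ℕ} (A : Finset (Fin n)) : List (ETO n) :=
  tChain (A.sort (· ≤ ·))

/-- The word `e_ij = e_i t_ij e_j` for distinct `i, j`. -/
def eWord {n : ℕ} (i j : Fin n) (h : i ≠ j) : List (ETO n) :=
  [ETO.e i, tg i j h, ETO.e j]

/-- `α` lies in (the copy inside `RP_n` of) the symmetric inverse monoid `I_n`:
no rook dots, and every block has at most one upper and at most one lower point. -/
def RP.MemIn {n : ℕ} (α : RP n) : Prop :=
  α.NoDots ∧ (∀ i j : Fin n, α.rel (Sum.inl i) (Sum.inl j) → i = j) ∧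
    (∀ i j : Fin n, α.rel (Sum.inr i) (Sum.inr j) → i = j)


/-! ## The alphabet S ∪ E ∪ Q ∪ O and the relations (R18)–(R43) -/

/-- The alphabet `S ∪ E ∪ Q ∪ O`: letters `s_i, q_i` (`1 ≤ i ≤ n-1`, zero-based) and
`e_i, o_i` (`i ∈ [n]`). -/
inductive SEQO (n : ℕ) : Type
  | s : Fin (n - 1) → SEQO n
  | e : Fin n → SEQO n
  | q : Fin (n - 1) → SEQO n
  | o : Fin n → SEQO n

/-- `x` is a letter of `S`. -/
def SEQO.isS {n : ℕ} : SEQO n → Prop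
  | .s _ => True
  | _ => False

/-- The relations (R18)–(R43). -/
inductive RelSEQO (n : ℕ) : List (SEQO n) → List (SEQO n) → Prop
  | r18 (i : Fin (n - 1)) : RelSEQO n [.s i, .s i] []
  | r19 (i j : Fin (n - 1)) (h : i.val + 1 < j.val ∨ j.val + 1 < i.val) :
      RelSEQO n [.s i, .s j] [.s j, .s i]
  | r20 (i j : Fin (n - 1)) (h : i.val + 1 = j.val ∨ j.val + 1 = i.val) :
      RelSEQO n [.s i, .s j, .s i] [.s j, .s i, .s j]
  | r21 (i : Fin n) : RelSEQO n [.e i, .e i] [.e i]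
  | r22 (i j : Fin n) (h : i ≠ j) : RelSEQO n [.e i, .e j] [.e j, .e i]
  | r23 (i : Fin (n - 1)) (j : Fin n) (h : j ≠ lo i ∧ j ≠ hi i) :
      RelSEQO n [.s i, .e j] [.e j, .s i]
  | r24 (i : Fin (n - 1)) : RelSEQO n [.s i, .e (lo i)] [.e (hi i), .s i]
  | r25 (i : Fin (n - 1)) : RelSEQO n [.e (lo i), .e (hi i), .s i] [.e (lo i), .e (hi i)]
  | r26 (i : Fin (n - 1)) : RelSEQO n [.q i, .q i] [.q i]
  | r27 (i j : Fin (n - 1)) (h : i ≠ j) : RelSEQO n [.q i, .q j] [.q j, .q i]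
  | r28 (i j : Fin (n - 1)) (h : i.val + 1 < j.val ∨ j.val + 1 < i.val) :
      RelSEQO n [.s i, .q j] [.q j, .s i]
  | r29 (i j : Fin (n - 1)) (h : i.val + 1 = j.val ∨ j.val + 1 = i.val) :
      RelSEQO n [.s i, .s j, .q i] [.q j, .s i, .s j]
  | r30a (i : Fin (n - 1)) : RelSEQO n [.q i, .s i] [.q i]
  | r30b (i : Fin (n - 1)) : RelSEQO n [.s i, .q i] [.q i]
  | r31 (i : Fin (n - 1)) (j : Fin n) (h : j ≠ lo i ∧ j ≠ hi i) :
      RelSEQO n [.q i, .e j] [.e j, .q i]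
  | r32 (i : Fin (n - 1)) (j : Fin n) (h : j = lo i ∨ j = hi i) :
      RelSEQO n [.q i, .e j, .q i] [.q i]
  | r33 (i : Fin (n - 1)) (j : Fin n) (h : j = lo i ∨ j = hi i) :
      RelSEQO n [.e j, .q i, .e j] [.e j]
  | r34 (i : Fin n) : RelSEQO n [.o i, .o i] [.o i]
  | r35 (i j : Fin n) (h : i ≠ j) : RelSEQO n [.o i, .o j] [.o j, .o i]
  | r36 (i : Fin (n - 1)) (j : Fin n) (h : j ≠ lo i ∧ j ≠ hi i) :
      RelSEQO n [.s i, .o j] [.o j, .s i]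
  | r37 (i : Fin (n - 1)) : RelSEQO n [.s i, .o (lo i)] [.o (hi i), .s i]
  | r38 (i : Fin (n - 1)) : RelSEQO n [.o (lo i), .o (hi i), .s i] [.o (lo i), .o (hi i)]
  | r39 (i j : Fin n) (h : i ≠ j) : RelSEQO n [.o i, .e j] [.e j, .o i]
  | r40 (i : Fin n) : RelSEQO n [.o i, .e i, .o i] [.o i]
  | r41 (i : Fin n) : RelSEQO n [.e i, .o i, .e i] [.e i]
  | r42 (i : Fin (n - 1)) (j : Fin n) : RelSEQO n [.q i, .o j] [.o j, .q i]
  | r43a (i : Fin (n - 1)) : RelSEQO n [.q i, .o (lo i)] [.o (lo i), .o (hi i)]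
  | r43b (i : Fin (n - 1)) : RelSEQO n [.q i, .o (hi i)] [.o (lo i), .o (hi i)]

/-- The map `Ψ` on letters. -/
def psiLetter {n : ℕ} : SEQO n → RP n
  | .s i => sbar i
  | .e i => ebar i
  | .q i => qbar i
  | .o i => obar i

/-- The homomorphism `Ψ : (S ∪ E ∪ Q ∪ O)* → RP_n`. -/
def PsiW {n : ℕ} : List (SEQO n) → RP n := evalWord psiLetter

/-- The word `σ_ij = s_{i+1} ⋯ s_{j-1}` (for points `i < j`, zero-based: the `s`-letters
with zero-based indices strictly between `i` and `j`, in increasing order). -/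
def sigmaW {n : ℕ} (i j : Fin n) : List (SEQO n) :=
  ((List.finRange (n - 1)).filter (fun k => decide (i.val < k.val ∧ k.val < j.val))).map
    SEQO.s

/-- The word `τ_ij = σ_ij⁻¹ q_i σ_ij`, whose image under `Ψ` is `t̄_ij`. -/
def tauW {n : ℕ} (i j : Fin n) (h : i < j) : List (SEQO n) :=
  (sigmaW i j).reverse ++
    (SEQO.q ⟨i.val, by have hb := j.isLt; have hab : i.val < j.val := h; omega⟩ ::
      sigmaW i j)

/-- The homomorphism `ρ` on letters: `e_i ↦ e_i`, `o_i ↦ o_i`, `t_ij ↦ τ_ij`. -/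
def rhoLetter {n : ℕ} : ETO n → List (SEQO n)
  | .e i => [SEQO.e i]
  | .t i j h => tauW i j h
  | .o i => [SEQO.o i]

/-- The semigroup homomorphism `ρ : (E ∪ T ∪ O)⁺ → (S ∪ E ∪ Q ∪ O)*`. -/
def rho {n : ℕ} (w : List (ETO n)) : List (SEQO n) :=
  w.foldr (fun x acc => rhoLetter x ++ acc) []


section Proof
open Equiv

/-! ### A faithful representation by relations on colourings -/

/-- Binary relations on two-colourings of `[n]`; a monoid under relational composition. -/
def BRel (n : ℕ) := (Fin n → Bool) → (Fin n → Bool) → Prop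

theorem BRel.ext {n : ℕ} {R R' : BRel n} (h : ∀ x y, R x y ↔ R' x y) : R = R' :=
  funext fun x => funext fun y => propext (h x y)

instance {n : ℕ} : Monoid (BRel n) where
  mul R R' := fun x z => ∃ y, R x y ∧ R' y z
  one := fun x y => y = x
  mul_assoc R R' R'' := BRel.ext fun x z =>
    ⟨fun ⟨y, ⟨w, h1, h2⟩, h3⟩ => ⟨w, h1, y, h2, h3⟩,
      fun ⟨w, h1, y, h2, h3⟩ => ⟨y, ⟨w, h1, h2⟩, h3⟩⟩
  one_mul R := BRel.ext fun x z =>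
    ⟨fun ⟨y, h1, h2⟩ => by subst h1; exact h2, fun h => ⟨x, rfl, h⟩⟩
  mul_one R := BRel.ext fun x z =>
    ⟨fun ⟨y, h1, h2⟩ => by subst h2; exact h1, fun h => ⟨z, h, rfl⟩⟩

theorem BRel.mul_apply {n : ℕ} (R R' : BRel n) (x z) :
    (R * R') x z ↔ ∃ y, R x y ∧ R' y z := Iff.rfl

theorem BRel.one_apply {n : ℕ} (x y) : (1 : BRel n) x y ↔ y = x := Iff.rfl

/-- A colouring of the points is admissible for `α` if it is constant on blocks and `false`
on rook dots. -/
def Valid {n : ℕ} (α : RP n) (c : Pt n → Bool) : Prop :=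
  (∀ a b, α.rel a b → c a = c b) ∧ ∀ a, ¬ α.rel a a → c a = false

/-- The relation between colourings of the upper row and colourings of the lower row which
together form an admissible colouring. The colour `false` marks rook dots, as if all of them
belonged to one additional block whose colour is prescribed. -/
def nu {n : ℕ} (α : RP n) : BRel n := fun x y => Valid α (Sum.elim x y)

theorem RP.ext' {n : ℕ} {α β : RP n} (h : ∀ a b, α.rel a b ↔ β.rel a b) : α = β := by
  cases α; cases β
  congr
  funext a b
  exact propext (h a b)

/-- A rook partition is recovered from its admissible colourings. -/
theorem rel_iff_valid {n : ℕ} (α : RP n) (a b : Pt n) :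
    α.rel a b ↔ (∃ c, Valid α c ∧ c a = true) ∧ ∀ c, Valid α c → c a = c b := by
  classical
  have hblock : Valid α fun d => decide (α.rel a d) := by
    refine ⟨fun d d' h => ?_, fun d h => ?_⟩
    · simp only [decide_eq_decide]
      exact ⟨fun h' => α.trans h' h, fun h' => α.trans h' (α.symm h)⟩
    · simp only [decide_eq_false_iff_not]
      exact fun h' => h (α.trans (α.symm h') h')
  constructor
  · intro h
    have haa := α.trans h (α.symm h)
    exact ⟨⟨_, hblock, by simpa using haa⟩, fun c hc => hc.1 a b h⟩
  · rintro ⟨⟨c, hc, hca⟩, h⟩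
    have haa : α.rel a a := by
      by_contra hn
      rw [hc.2 a hn] at hca
      exact absurd hca (by simp)
    have := h _ hblock
    simpa [haa] using this

theorem nu_injective {n : ℕ} : Function.Injective (nu : RP n → BRel n) := by
  intro α β h
  have hv : ∀ c, Valid α c ↔ Valid β c := by
    intro c
    have := congrFun (congrFun h (c ∘ Sum.inl)) (c ∘ Sum.inr)
    simp only [nu, Sum.elim_comp_inl_inr] at this
    exact iff_of_eq this
  exact RP.ext' fun a b => by simp only [rel_iff_valid, hv]

theorem nu_one {n : ℕ} : nu (1 : RP n) = 1 := by
  refine BRel.ext fun x y => ?_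
  constructor
  · intro h
    funext i
    exact (h.1 (Sum.inl i) (Sum.inr i) rfl).symm
  · intro h
    obtain rfl : y = x := h
    refine ⟨?_, fun a h => absurd rfl h⟩
    rintro (a | a) (b | b) h <;> exact congrArg y h

/-- Gluing colourings: an admissible pair for `αβ` extends to the middle row of `Γ(α,β)` by
giving a vertex the colour `true` exactly if it is connected to an output point of that colour. -/
theorem nu_mul {n : ℕ} (α β : RP n) : nu (α * β) = nu α * nu β := by
  classical
  refine BRel.ext fun x z => ⟨fun h => ?_, ?_⟩
  · set c := Sum.elim x z with hc
    have h' : Valid (α * β) c := h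
    let C : V3 n → Bool := fun v => decide (∃ p, pgConn α β v (embOut p) ∧ c p = true)
    have hconn : ∀ v w, pgConn α β v w → C v = C w := by
      intro v w hvw
      simp only [C, decide_eq_decide]
      exact ⟨fun ⟨p, h1, h2⟩ => ⟨p, (hvw.symm).trans h1, h2⟩,
        fun ⟨p, h1, h2⟩ => ⟨p, hvw.trans h1, h2⟩⟩
    have hndot : ∀ p, c p = true → ∀ w, pgWhite α β w → ¬ pgConn α β (embOut p) w := by
      intro p hp
      by_contra hn
      have : ¬ (α * β).rel p p := fun hr => hn hr.2
      rw [h'.2 p this] at hp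
      exact absurd hp (by simp)
    have hwhite : ∀ w, pgWhite α β w → C w = false := by
      intro w hw
      simp only [C, decide_eq_false_iff_not]
      rintro ⟨p, h1, h2⟩
      exact hndot p h2 w hw h1.symm
    have hout : ∀ p, C (embOut p) = c p := by
      intro p
      rw [Bool.eq_iff_iff]
      simp only [C, decide_eq_true_eq]
      refine ⟨fun ⟨p', h1, h2⟩ => ?_, fun h => ⟨p, RClosure.refl _, h⟩⟩
      rw [← h'.1 p' p ⟨h1.symm, hndot p' h2⟩, h2]
    have hA : ∀ a, Sum.elim x (fun i => C (vMid i)) a = C (embA a) := by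
      rintro (i | i)
      · exact (hout (Sum.inl i)).symm
      · rfl
    have hB : ∀ a, Sum.elim (fun i => C (vMid i)) z a = C (embB a) := by
      rintro (i | i)
      · rfl
      · exact (hout (Sum.inr i)).symm
    refine ⟨fun i => C (vMid i), ⟨fun a b hab => ?_, fun a ha => ?_⟩,
      ⟨fun a b hab => ?_, fun a ha => ?_⟩⟩
    · rw [hA, hA]
      exact hconn _ _ (RClosure.base (Or.inl ⟨a, b, hab, rfl, rfl⟩))
    · rw [hA]
      apply hwhite
      rcases a with i | i
      · exact Or.inl ⟨i, rfl, ha⟩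
      · exact Or.inr (Or.inl ⟨i, rfl, Or.inl ha⟩)
    · rw [hB, hB]
      exact hconn _ _ (RClosure.base (Or.inr ⟨a, b, hab, rfl, rfl⟩))
    · rw [hB]
      apply hwhite
      rcases a with i | i
      · exact Or.inr (Or.inl ⟨i, rfl, Or.inr ha⟩)
      · exact Or.inr (Or.inr ⟨i, rfl, ha⟩)
  · rintro ⟨y, hα, hβ⟩
    let C : V3 n → Bool := Sum.elim x (Sum.elim y z)
    have hA : ∀ a, C (embA a) = Sum.elim x y a := by rintro (i | i) <;> rfl
    have hB : ∀ a, C (embB a) = Sum.elim y z a := by rintro (i | i) <;> rfl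
    have hO : ∀ a, C (embOut a) = Sum.elim x z a := by rintro (i | i) <;> rfl
    have hconn : ∀ v w, pgConn α β v w → C v = C w := by
      intro v w h
      induction h with
      | base h =>
        rcases h with ⟨a, b, h, rfl, rfl⟩ | ⟨a, b, h, rfl, rfl⟩
        · rw [hA, hA]; exact hα.1 a b h
        · rw [hB, hB]; exact hβ.1 a b h
      | refl => rfl
      | symm _ ih => exact ih.symm
      | trans _ _ ih1 ih2 => exact ih1.trans ih2
    have hwhite : ∀ w, pgWhite α β w → C w = false := by
      rintro w (⟨i, rfl, h⟩ | ⟨i, rfl, h | h⟩ | ⟨i, rfl, h⟩)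
      · exact hα.2 _ h
      · exact hα.2 (Sum.inr i) h
      · exact hβ.2 (Sum.inl i) h
      · exact hβ.2 _ h
    refine ⟨fun a b hab => ?_, fun a ha => ?_⟩
    · rw [← hO, ← hO]; exact hconn _ _ hab.1
    · by_contra hne
      apply ha
      refine ⟨RClosure.refl _, fun w hw hc => hne ?_⟩
      rw [← hO, hconn _ _ hc, hwhite w hw]

/-! ### The generators as relations -/

/-- The colouring extended to the additional point `none`, which has the colour of rook dots. -/
def xt {n : ℕ} (x : Fin n → Bool) : Option (Fin n) → Bool := fun o => o.elim false x

@[simp] theorem xt_none {n : ℕ} (x : Fin n → Bool) : xt x none = false := rfl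
@[simp] theorem xt_some {n : ℕ} (x : Fin n → Bool) (i : Fin n) : xt x (some i) = x i := rfl

/-- The relation of a permutation. -/
def pR {n : ℕ} (σ : Perm (Fin n)) : BRel n := fun x y => y = x ∘ σ
/-- The relation of `ē_i`: the colour at `i` is forgotten. -/
def eR {n : ℕ} (i : Fin n) : BRel n := fun x y => ∃ b, y = Function.update x i b
/-- The relation of `t̄_pq`, with `t̄_{i,none}` standing for `ō_i`: the colours at `p` and `q`
agree. -/
def tR {n : ℕ} (p q : Option (Fin n)) : BRel n := fun x y => y = x ∧ xt x p = xt x q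

theorem nu_sbar {n : ℕ} (i : Fin (n - 1)) : nu (sbar i) = pR (swap (lo i) (hi i)) := by
  refine BRel.ext fun x y => ⟨fun h => ?_, ?_⟩
  · funext j
    exact (h.1 (Sum.inl (swap (lo i) (hi i) j)) (Sum.inr j) (by simp [sbar, permRP])).symm
  · intro h
    obtain rfl : y = _ := h
    refine ⟨?_, fun a h => absurd rfl h⟩
    rintro (a | a) (b | b) h <;> simp only [sbar, permRP, Sum.elim_inl, Sum.elim_inr] at h
    · rw [Equiv.injective _ h]
    · simp [← h]
    · simp [h]
    · rw [h]

theorem nu_ebar {n : ℕ} (i : Fin n) : nu (ebar i) = eR i := by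
  refine BRel.ext fun x y => ⟨fun h => ⟨y i, ?_⟩, ?_⟩
  · funext j
    rcases eq_or_ne j i with rfl | hj
    · simp
    · rw [Function.update_of_ne hj]
      exact h.1 (Sum.inr j) (Sum.inl j) (Or.inr ⟨rfl, hj⟩)
  · rintro ⟨c, rfl⟩
    refine ⟨?_, fun a h => absurd (Or.inl rfl) h⟩
    rintro a b (rfl | ⟨h1, h2⟩)
    · rfl
    · rcases a with a | a <;> rcases b with b | b <;>
        simp only [idx, Sum.elim_inl, Sum.elim_inr, id] at h1 h2 <;> subst h1 <;>
        simp [Function.update_of_ne h2]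

theorem nu_qbar {n : ℕ} (i : Fin (n - 1)) : nu (qbar i) = tR (some (lo i)) (some (hi i)) := by
  refine BRel.ext fun x y => ⟨fun h => ⟨?_, ?_⟩, ?_⟩
  · funext j
    exact h.1 (Sum.inr j) (Sum.inl j) (Or.inl rfl)
  · exact h.1 (Sum.inl (lo i)) (Sum.inl (hi i)) (Or.inr ⟨Or.inl rfl, Or.inr rfl⟩)
  · rintro ⟨rfl, h⟩
    simp only [xt_some] at h
    refine ⟨?_, fun a h => absurd (Or.inl rfl) h⟩
    have key : ∀ a b : Fin n, (a = b ∨ ((a = lo i ∨ a = hi i) ∧ (b = lo i ∨ b = hi i))) →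
        y a = y b := by
      rintro a b (rfl | ⟨rfl | rfl, rfl | rfl⟩) <;> simp [h]
    rintro (a | a) (b | b) hab <;> exact key a b hab

theorem nu_obar {n : ℕ} (i : Fin n) : nu (obar i) = tR none (some i) := by
  refine BRel.ext fun x y => ⟨fun h => ⟨?_, ?_⟩, ?_⟩
  · funext j
    by_cases hj : j = i
    · subst hj
      have h1 := h.2 (Sum.inl j) (fun h => h.2 rfl)
      have h2 := h.2 (Sum.inr j) (fun h => h.2 rfl)
      simp only [Sum.elim_inl, Sum.elim_inr] at h1 h2
      rw [h1, h2]
    · exact h.1 (Sum.inr j) (Sum.inl j) ⟨rfl, hj⟩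
  · exact (h.2 (Sum.inl i) (fun h => h.2 rfl)).symm
  · rintro ⟨rfl, h⟩
    simp only [xt_some, xt_none] at h
    have key : ∀ a b : Pt n, idx a = idx b → Sum.elim y y a = Sum.elim y y b := by
      rintro (a | a) (b | b) hab <;> exact congrArg y hab
    refine ⟨fun a b hab => key a b hab.1, fun a ha => ?_⟩
    have : idx a = i := by
      by_contra hne
      exact ha ⟨rfl, hne⟩
    rw [key a (Sum.inl i) this]
    exact h.symm

/-- The representation of the letters. -/
def letR {n : ℕ} : SEQO n → BRel n
  | .s i => pR (swap (lo i) (hi i))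
  | .e i => eR i
  | .q i => tR (some (lo i)) (some (hi i))
  | .o i => tR none (some i)

theorem nu_psiLetter {n : ℕ} (a : SEQO n) : nu (psiLetter a) = letR a := by
  cases a
  · exact nu_sbar _
  · exact nu_ebar _
  · exact nu_qbar _
  · exact nu_obar _

theorem nu_PsiW {n : ℕ} (w : List (SEQO n)) : nu (PsiW w) = (w.map letR).prod := by
  induction w with
  | nil => exact nu_one
  | cons a w ih =>
    rw [List.map_cons, List.prod_cons, ← ih, ← nu_psiLetter]
    cases w with
    | nil => rw [show PsiW ([] : List (SEQO n)) = 1 from rfl, nu_one, mul_one]; rfl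
    | cons b w => exact nu_mul _ _

/-! ### Extended generators -/

/-- A monoid containing an image of the symmetric group together with elements `e_i` and `t_pq`,
where `p, q` run over `[n]` and one additional point `none`, subject to the expected relations.
The element `t_{none,i}` plays the role of `o_i`: a rook dot at `i` means that `i` is joined to the
additional point. In this way the relations for `o_i` become instances of those for `t_ij`. -/
structure RookSys (n : ℕ) (M : Type*) [Monoid M] where
  φ : Perm (Fin n) →* M
  e : Fin n → M
  t : Option (Fin n) → Option (Fin n) → M
  φ_e : ∀ σ i, φ σ * e i = e (σ i) * φ σ
  φ_t : ∀ σ p q, φ σ * t p q = t (p.map σ) (q.map σ) * φ σ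
  e_comm : ∀ i j, e i * e j = e j * e i
  e_idem : ∀ i, e i * e i = e i
  t_self : ∀ p, t p p = 1
  t_symm : ∀ p q, t p q = t q p
  t_idem : ∀ p q, t p q * t p q = t p q
  t_comm : ∀ p q r s, t p q * t r s = t r s * t p q
  t_trans : ∀ p q r, t p q * t q r = t p q * t p r
  e_t : ∀ i p q, p ≠ some i → q ≠ some i → e i * t p q = t p q * e i
  ete : ∀ i p, p ≠ some i → e i * t (some i) p * e i = e i
  tet : ∀ i p, p ≠ some i → t (some i) p * e i * t (some i) p = t (some i) p
  eeφ : ∀ i j, i ≠ j → e i * e j * φ (swap i j) = e i * e j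
  tφ : ∀ i j, t (some i) (some j) * φ (swap i j) = t (some i) (some j)

theorem pR_mul {n : ℕ} (σ τ : Perm (Fin n)) : pR (σ * τ) = pR σ * pR τ := by
  refine BRel.ext fun x z => ⟨fun h => ⟨x ∘ σ, rfl, h⟩, ?_⟩
  rintro ⟨y, rfl, rfl⟩
  rfl

theorem xt_comp {n : ℕ} (x : Fin n → Bool) (σ : Perm (Fin n)) (p : Option (Fin n)) :
    xt (x ∘ σ) p = xt x (p.map σ) := by cases p <;> rfl

theorem xt_update {n : ℕ} (x : Fin n → Bool) (i : Fin n) (b : Bool) (p : Option (Fin n))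
    (h : p ≠ some i) : xt (Function.update x i b) p = xt x p := by
  cases p with
  | none => rfl
  | some j => exact Function.update_of_ne (fun h' => h (congrArg some h')) _ _

theorem xt_update_self {n : ℕ} (x : Fin n → Bool) (i : Fin n) (b : Bool) :
    xt (Function.update x i b) (some i) = b := by simp

theorem tR_mul_iff {n : ℕ} (p q : Option (Fin n)) (R : BRel n) (x z) :
    (tR p q * R) x z ↔ xt x p = xt x q ∧ R x z :=
  ⟨fun ⟨_, ⟨h1, h2⟩, h3⟩ => by subst h1; exact ⟨h2, h3⟩, fun ⟨h1, h2⟩ => ⟨x, ⟨rfl, h1⟩, h2⟩⟩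

theorem mul_tR_iff {n : ℕ} (p q : Option (Fin n)) (R : BRel n) (x z) :
    (R * tR p q) x z ↔ R x z ∧ xt z p = xt z q :=
  ⟨fun ⟨_, h3, ⟨h1, h2⟩⟩ => by subst h1; exact ⟨h3, h2⟩, fun ⟨h1, h2⟩ => ⟨z, h1, rfl, h2⟩⟩

theorem eR_mul_iff {n : ℕ} (i : Fin n) (R : BRel n) (x z) :
    (eR i * R) x z ↔ ∃ b, R (Function.update x i b) z :=
  ⟨fun ⟨_, ⟨b, h1⟩, h3⟩ => by subst h1; exact ⟨b, h3⟩, fun ⟨b, h⟩ => ⟨_, ⟨b, rfl⟩, h⟩⟩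

theorem pR_mul_iff {n : ℕ} (σ : Perm (Fin n)) (R : BRel n) (x z) :
    (pR σ * R) x z ↔ R (x ∘ σ) z :=
  ⟨fun ⟨_, h1, h3⟩ => by obtain rfl : _ = _ := h1; exact h3, fun h => ⟨_, rfl, h⟩⟩

/-- The permutations as relations. -/
def pHom (n : ℕ) : Perm (Fin n) →* BRel n where
  toFun := pR
  map_one' := BRel.ext fun _ _ => Iff.rfl
  map_mul' := pR_mul

theorem pHom_apply {n : ℕ} (σ : Perm (Fin n)) : pHom n σ = pR σ := rfl

/-- The relations of permutations, `ē_i` and `t̄_pq`. -/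
def bSys (n : ℕ) : RookSys n (BRel n) where
  φ := pHom n
  e := eR
  t := tR
  φ_e σ i := BRel.ext fun x z => by
    simp only [pHom_apply, pR_mul_iff, eR_mul_iff, eR, pR]
    refine exists_congr fun b => ?_
    rw [Function.update_comp_equiv, Equiv.symm_apply_apply]
  φ_t σ p q := BRel.ext fun x z => by
    simp only [pHom_apply, pR_mul_iff, tR_mul_iff, tR, pR, xt_comp, and_comm]
  e_comm i j := BRel.ext fun x z => by
    rcases eq_or_ne i j with rfl | h
    · rfl
    · simp only [eR_mul_iff, eR, Function.update_comm h]
      exact exists_comm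
  e_idem i := BRel.ext fun x z => by simp [eR_mul_iff, eR]
  t_self p := BRel.ext fun x z => by simp [tR, BRel.one_apply]
  t_symm p q := BRel.ext fun x z => by simp [tR, eq_comm]
  t_idem p q := BRel.ext fun x z => by simp only [tR_mul_iff, tR]; tauto
  t_comm p q r s := BRel.ext fun x z => by simp only [tR_mul_iff, tR]; tauto
  t_trans p q r := BRel.ext fun x z => by
    simp only [tR_mul_iff, tR]
    refine and_congr_right fun h => ?_
    rw [h]
  e_t i p q hp hq := BRel.ext fun x z => by
    simp only [tR_mul_iff, eR_mul_iff, tR, xt_update _ _ _ _ hp, xt_update _ _ _ _ hq, eR]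
    tauto
  ete i p h := BRel.ext fun x z => by
    simp only [mul_assoc, tR_mul_iff, eR_mul_iff, eR, xt_update_self, xt_update _ _ _ _ h,
      Function.update_idem]
    exact ⟨fun ⟨_, _, h⟩ => h, fun h => ⟨_, rfl, h⟩⟩
  tet i p h := BRel.ext fun x z => by
    simp only [mul_assoc, tR_mul_iff, eR_mul_iff, tR, xt_update_self, xt_update _ _ _ _ h]
    constructor
    · rintro ⟨h1, b, rfl, h2⟩
      refine ⟨?_, h1⟩
      rw [h2, ← h1, xt_some, Function.update_eq_self]
    · rintro ⟨rfl, h1⟩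
      refine ⟨h1, xt z p, ?_, rfl⟩
      rw [← h1, xt_some, Function.update_eq_self]
  eeφ i j h := BRel.ext fun x z => by
    simp only [pHom_apply, mul_assoc, eR_mul_iff, eR, pR,
      Function.update_comp_equiv, symm_swap, swap_apply_left, swap_apply_right]
    have key : ∀ b c, Function.update (Function.update (x ∘ swap i j) j b) i c =
        Function.update (Function.update x i c) j b := by
      intro b c
      funext k
      rw [Function.update_comm h.symm]
      rcases eq_or_ne k j with rfl | hkj
      · simp
      · rw [Function.update_of_ne hkj, Function.update_of_ne hkj]
        rcases eq_or_ne k i with rfl | hki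
        · simp
        · rw [Function.update_of_ne hki, Function.update_of_ne hki, Function.comp,
            swap_apply_of_ne_of_ne hki hkj]
    simp only [key]
    exact exists_comm
  tφ i j := BRel.ext fun x z => by
    simp only [pHom_apply, tR_mul_iff, tR, pR, xt_some]
    rw [and_comm]
    refine and_congr_left fun h => ?_
    rw [Equiv.comp_swap_eq_update]
    rw [h, Function.update_eq_self, ← h, Function.update_eq_self]

/-- The value of a letter in a monoid with extended generators. -/
def RookSys.letter {n : ℕ} {M : Type*} [Monoid M] (D : RookSys n M) : SEQO n → M
  | .s i => D.φ (swap (lo i) (hi i))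
  | .e i => D.e i
  | .q i => D.t (some (lo i)) (some (hi i))
  | .o i => D.t none (some i)

theorem bSys_letter {n : ℕ} : (bSys n).letter = letR := by
  funext a
  cases a <;> rfl

theorem hi_eq_lo {n : ℕ} {i j : Fin (n - 1)} (h : i.val + 1 = j.val) : hi i = lo j :=
  Fin.ext h

theorem lo_ne_hi_of_lt {n : ℕ} {i j : Fin (n - 1)} (h : i.val < j.val + 1) : lo i ≠ hi j := by
  simp only [lo, hi, ne_eq, Fin.ext_iff]; omega

theorem swap_braid {α : Type*} [DecidableEq α] {a b c : α} (hab : a ≠ b) (hbc : b ≠ c)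
    (hac : a ≠ c) : swap a b * swap b c * swap a b = swap b c * swap a b * swap b c := by
  rw [swap_mul_swap_mul_swap hab hac, swap_comm a b, swap_comm b c,
    swap_mul_swap_mul_swap hbc.symm hac.symm, swap_comm]

theorem swap_far {n : ℕ} {i j : Fin (n - 1)} (h : i.val + 1 < j.val ∨ j.val + 1 < i.val) :
    swap (lo i) (hi i) * swap (lo j) (hi j) = swap (lo j) (hi j) * swap (lo i) (hi i) := by
  apply Equiv.Perm.Disjoint.commute
  intro k
  by_cases hk : k = lo i ∨ k = hi i
  · right
    apply swap_apply_of_ne_of_ne <;> rcases hk with rfl | rfl <;>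
      simp only [lo, hi, ne_eq, Fin.ext_iff] <;> omega
  · left
    push Not at hk
    exact swap_apply_of_ne_of_ne hk.1 hk.2

theorem swap_near {n : ℕ} {i j : Fin (n - 1)} (h : i.val + 1 = j.val ∨ j.val + 1 = i.val) :
    swap (lo i) (hi i) * (swap (lo j) (hi j) * swap (lo i) (hi i)) =
      swap (lo j) (hi j) * (swap (lo i) (hi i) * swap (lo j) (hi j)) := by
  rw [← mul_assoc, ← mul_assoc]
  rcases h with h | h <;> rw [← hi_eq_lo h]
  · exact swap_braid (lo_ne_hi_of_lt (by omega)) (hi_eq_lo h ▸ lo_ne_hi_of_lt (by omega))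
      (lo_ne_hi_of_lt (by omega))
  · exact (swap_braid (lo_ne_hi_of_lt (by omega)) (hi_eq_lo h ▸ lo_ne_hi_of_lt (by omega))
      (lo_ne_hi_of_lt (by omega))).symm

theorem lo_ne_hi {n : ℕ} (i : Fin (n - 1)) : lo i ≠ hi i := by
  simp [lo, hi, Fin.ext_iff]

/-- The relations between extended generators imply the defining relations. -/
theorem RookSys.letter_rel {n : ℕ} {M : Type*} [Monoid M] (D : RookSys n M)
    {u v : List (SEQO n)} (h : RelSEQO n u v) :
    (u.map D.letter).prod = (v.map D.letter).prod := by
  cases h <;> simp only [List.map_cons, List.map_nil, List.prod_cons, List.prod_nil, mul_one,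
    RookSys.letter]
  case r18 i => rw [← map_mul, swap_mul_self, map_one]
  case r19 i j h =>
    rw [← map_mul, ← map_mul]
    congr 1
    exact swap_far h
  case r20 i j h =>
    rw [← map_mul, ← map_mul, ← map_mul, ← map_mul]
    congr 1
    exact swap_near h
  case r21 i => exact D.e_idem i
  case r22 i j h => exact D.e_comm i j
  case r23 i j h => rw [D.φ_e, swap_apply_of_ne_of_ne h.1 h.2]
  case r24 i => rw [D.φ_e, swap_apply_left]
  case r25 i => rw [← mul_assoc]; exact D.eeφ _ _ (lo_ne_hi i)
  case r26 i => exact D.t_idem _ _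
  case r27 i j h => exact D.t_comm _ _ _ _
  case r28 i j h =>
    rw [D.φ_t, Option.map_some, Option.map_some, swap_apply_of_ne_of_ne, swap_apply_of_ne_of_ne] <;>
      simp only [lo, hi, ne_eq, Fin.ext_iff] <;> omega
  case r29 i j h =>
    rw [D.φ_t, ← mul_assoc, D.φ_t, mul_assoc]
    simp only [Option.map_some]
    rcases h with h | h
    · have h1 : lo i ≠ hi j := lo_ne_hi_of_lt (by omega)
      have h2 : lo i ≠ lo j := hi_eq_lo h ▸ lo_ne_hi_of_lt (by omega)
      have h3 : hi j ≠ hi i := hi_eq_lo h ▸ (lo_ne_hi_of_lt (by omega)).symm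
      rw [swap_apply_of_ne_of_ne h2 h1, swap_apply_left, hi_eq_lo h, swap_apply_left,
        ← hi_eq_lo h, swap_apply_of_ne_of_ne h1.symm h3]
    · have h1 : lo j ≠ hi i := lo_ne_hi_of_lt (by omega)
      have h2 : lo j ≠ lo i := hi_eq_lo h ▸ lo_ne_hi_of_lt (by omega)
      have h3 : hi i ≠ hi j := hi_eq_lo h ▸ (lo_ne_hi_of_lt (by omega)).symm
      rw [swap_apply_of_ne_of_ne h1.symm h3, swap_apply_right, ← hi_eq_lo h, swap_apply_right,
        hi_eq_lo h, swap_apply_of_ne_of_ne h2 h1]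
  case r30a i => exact D.tφ _ _
  case r30b i =>
    rw [D.φ_t, Option.map_some, Option.map_some, swap_apply_left, swap_apply_right, D.t_symm, D.tφ]
  case r31 i j h =>
    exact (D.e_t _ _ _ (fun h' => h.1 (Option.some_injective _ h').symm)
      (fun h' => h.2 (Option.some_injective _ h').symm)).symm
  case r32 i j h =>
    rw [← mul_assoc]
    have hne := lo_ne_hi i
    rcases h with rfl | rfl
    · exact D.tet _ _ (fun h' => hne (Option.some_injective _ h').symm)
    · rw [D.t_symm]
      exact D.tet _ _ (fun h' => hne (Option.some_injective _ h'))
  case r33 i j h =>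
    rw [← mul_assoc]
    have hne := lo_ne_hi i
    rcases h with rfl | rfl
    · exact D.ete _ _ (fun h' => hne (Option.some_injective _ h').symm)
    · rw [D.t_symm (some (lo i))]
      exact D.ete _ _ (fun h' => hne (Option.some_injective _ h'))
  case r34 i => exact D.t_idem _ _
  case r35 i j h => exact D.t_comm _ _ _ _
  case r36 i j h =>
    rw [D.φ_t, Option.map_some, Option.map_none, swap_apply_of_ne_of_ne h.1 h.2]
  case r37 i => rw [D.φ_t, Option.map_some, Option.map_none, swap_apply_left]
  case r38 i =>
    -- `t_{∞i} t_{∞j} = t_{∞i} t_{ij}`, and `t_{ij}` absorbs the transposition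
    rw [← mul_assoc, ← D.t_trans, mul_assoc, D.tφ]
  case r39 i j h =>
    exact (D.e_t _ _ _ (fun h => by cases h) (fun h' => h (Option.some_injective _ h'))).symm
  case r40 i =>
    rw [← mul_assoc, D.t_symm]
    exact D.tet _ _ (fun h => by cases h)
  case r41 i =>
    rw [← mul_assoc, D.t_symm]
    exact D.ete _ _ (fun h => by cases h)
  case r42 i j => exact D.t_comm _ _ _ _
  case r43a i => rw [D.t_comm, D.t_trans]
  case r43b i => rw [D.t_comm, D.t_symm (some (lo i)), D.t_trans, D.t_comm]

/-! ### The Coxeter presentation of the symmetric group -/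

section Coxeter

variable {N : Type*} [Monoid N]

/-- The product `g_{k+d-1} ⋯ g_{k+1} g_k`. -/
def chain (g : ℕ → N) : ℕ → ℕ → N
  | _, 0 => 1
  | k, d + 1 => chain g (k + 1) d * g k

/-- The Coxeter relations of type `A` for the first `m` terms of a sequence. -/
structure CoxRel (g : ℕ → N) (m : ℕ) : Prop where
  sq : ∀ i < m, g i * g i = 1
  comm : ∀ i < m, ∀ j < m, i + 1 < j → g i * g j = g j * g i
  braid : ∀ i, i + 1 < m → g i * g (i + 1) * g i = g (i + 1) * g i * g (i + 1)

/-- The submonoid generated by the first `m` terms. -/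
def parab (g : ℕ → N) (m : ℕ) : Submonoid N := Submonoid.closure {x | ∃ i < m, x = g i}

theorem mem_parab (g : ℕ → N) {m i : ℕ} (h : i < m) : g i ∈ parab g m :=
  Submonoid.subset_closure ⟨i, h, rfl⟩

theorem chain_comm {g : ℕ → N} {m : ℕ} (h : CoxRel g m) {j : ℕ} :
    ∀ d k, k + d ≤ m → j + 1 < k → chain g k d * g j = g j * chain g k d := by
  intro d
  induction d with
  | zero => intro k _ _; simp [chain]
  | succ d ih =>
    intro k hk hj
    rw [chain, mul_assoc, ← h.comm j (by omega) k (by omega) hj, ← mul_assoc,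
      ih (k + 1) (by omega) (by omega), mul_assoc]

/-- Moving a generator across a descending chain containing it lowers its index by one. -/
theorem chain_braid {g : ℕ → N} {m : ℕ} (h : CoxRel g m) {j : ℕ} :
    ∀ d k, k + d ≤ m → k ≤ j → j + 1 < k + d →
      chain g k d * g (j + 1) = g j * chain g k d := by
  intro d
  induction d with
  | zero => intro k _ _ _; omega
  | succ d ih =>
    intro k hk hkj hj
    rcases hkj.eq_or_lt with rfl | hlt
    · obtain ⟨d, rfl⟩ : ∃ d', d = d' + 1 := ⟨d - 1, by omega⟩
      rw [chain, chain, mul_assoc, mul_assoc, ← mul_assoc (g (k + 1)), ← h.braid k (by omega),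
        mul_assoc, ← mul_assoc, chain_comm h d (k + 1 + 1) (by omega) (by omega)]
      simp only [mul_assoc]
    · rw [chain, mul_assoc, h.comm k (by omega) (j + 1) (by omega) (by omega), ← mul_assoc,
        ih (k + 1) (by omega) (by omega) (by omega), mul_assoc]

/-- Every element of the `(m+1)`-st parabolic submonoid is a product of an element of the `m`-th
one and a descending chain starting at index `m`. -/
theorem parab_succ {g : ℕ → N} {m : ℕ} (h : CoxRel g (m + 1)) {x : N} (hx : x ∈ parab g (m + 1)) :
    ∃ u ∈ parab g m, ∃ k d, k + d = m + 1 ∧ x = u * chain g k d := by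
  induction hx using Submonoid.closure_induction_right with
  | one => exact ⟨1, one_mem _, m + 1, 0, rfl, by simp [chain]⟩
  | mul_right x _ y hy ih =>
    obtain ⟨u, hu, k, d, hkd, rfl⟩ := ih
    obtain ⟨j, hj, rfl⟩ := hy
    rcases lt_trichotomy (j + 1) k with hjk | rfl | hjk
    · refine ⟨u * g j, mul_mem hu (mem_parab g (by omega)), k, d, hkd, ?_⟩
      rw [mul_assoc, chain_comm h d k hkd.le hjk, mul_assoc]
    · exact ⟨u, hu, j, d + 1, by omega, by rw [chain, mul_assoc]⟩
    · obtain ⟨d, rfl⟩ : ∃ d', d = d' + 1 := ⟨d - 1, by omega⟩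
      rcases (Nat.lt_succ_iff.mp hjk).eq_or_lt with rfl | hlt
      · refine ⟨u, hu, k + 1, d, by omega, ?_⟩
        rw [chain, mul_assoc, mul_assoc, h.sq k hj, mul_one]
      · obtain ⟨j, rfl⟩ : ∃ j', j = j' + 1 := ⟨j - 1, by omega⟩
        refine ⟨u * g j, mul_mem hu (mem_parab g (by omega)), k, d + 1, hkd, ?_⟩
        rw [mul_assoc, chain_braid h (d + 1) k hkd.le (by omega) (by omega), mul_assoc]

/-- The adjacent transpositions of `Fin n`, indexed by natural numbers. -/
def adj (n : ℕ) (i : ℕ) : Perm (Fin n) :=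
  if h : i < n - 1 then swap (lo ⟨i, h⟩) (hi ⟨i, h⟩) else 1

theorem adj_val {n : ℕ} {i : ℕ} (h : i < n - 1) : adj n i = swap (lo ⟨i, h⟩) (hi ⟨i, h⟩) :=
  dif_pos h

variable {M : Type*} [Monoid M]

/-- The projection of a chain to the symmetric group maps `k` to `k + d`. -/
theorem chain_apply {n : ℕ} (s : ℕ → M) :
    ∀ d k (hk : k + d < n), ((chain (fun i => (s i, adj n i)) k d).2 ⟨k, by omega⟩).val = k + d := by
  intro d
  induction d with
  | zero => intro k hk; rfl
  | succ d ih =>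
    intro k hk
    have h1 : adj n k ⟨k, by omega⟩ = ⟨k + 1, by omega⟩ := by
      rw [adj_val (show k < n - 1 by omega)]
      exact swap_apply_left _ _
    rw [chain, Prod.snd_mul, Perm.mul_apply, h1, ih (k + 1) (by omega)]
    omega

theorem parab_fix {n : ℕ} (s : ℕ → M) {m : ℕ} {x : M × Perm (Fin n)}
    (hx : x ∈ parab (fun i => (s i, adj n i)) m) (j : Fin n) (hj : m < j.val) : x.2 j = j := by
  induction hx using Submonoid.closure_induction with
  | one => rfl
  | mul x y _ _ ihx ihy => rw [Prod.snd_mul, Perm.mul_apply, ihy, ihx]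
  | mem x hx =>
    obtain ⟨i, hi, rfl⟩ := hx
    simp only
    have : i < n - 1 := by omega
    rw [adj_val this]
    apply swap_apply_of_ne_of_ne <;> simp only [lo, RookPaper.hi, ne_eq, Fin.ext_iff] <;> omega

theorem parab_ker {n : ℕ} (s : ℕ → M) : ∀ m, m ≤ n - 1 →
    CoxRel (fun i => (s i, adj n i)) m →
    ∀ x ∈ parab (fun i => (s i, adj n i)) m, x.2 = 1 → x = 1 := by
  intro m
  induction m with
  | zero =>
    intro _ _ x hx _
    have : {x : M × Perm (Fin n) | ∃ i < 0, x = (s i, adj n i)} = ∅ := by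
      ext; simp
    rw [parab, this, Submonoid.closure_empty] at hx
    exact hx
  | succ m ih =>
    intro hm h x hx hx1
    obtain ⟨u, hu, k, d, hkd, rfl⟩ := parab_succ h hx
    -- comparing the images of the point `k` shows that the chain is empty
    have hd : d = 0 := by
      have h1 : ((chain (fun i => (s i, adj n i)) k d).2 ⟨k, by omega⟩) = ⟨m + 1, by omega⟩ :=
        Fin.ext ((chain_apply s d k (by omega)).trans hkd)
      have h2 := congrArg (fun σ : Perm (Fin n) => (σ ⟨k, by omega⟩).val) hx1
      simp only [Prod.snd_mul, Perm.mul_apply, h1, Perm.one_apply] at h2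
      rw [parab_fix s hu _ (Nat.lt_succ_self m)] at h2
      simp only at h2
      omega
    subst hd
    rw [chain, mul_one] at hx1 ⊢
    refine ih (by omega) ⟨fun i hi => h.sq i (by omega), fun i hi j hj => h.comm i (by omega) j
      (by omega), fun i hi => h.braid i (by omega)⟩ u hu hx1

theorem parab_inv {N : Type*} [Monoid N] {g : ℕ → N} {m : ℕ} (h : CoxRel g m) {x : N}
    (hx : x ∈ parab g m) : ∃ y ∈ parab g m, x * y = 1 ∧ y * x = 1 := by
  induction hx using Submonoid.closure_induction with
  | one => exact ⟨1, one_mem _, by simp, by simp⟩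
  | mul x y _ _ ihx ihy =>
    obtain ⟨x', hx', h1, h2⟩ := ihx
    obtain ⟨y', hy', h3, h4⟩ := ihy
    refine ⟨y' * x', mul_mem hy' hx', ?_, ?_⟩
    · rw [mul_assoc, ← mul_assoc y, h3, one_mul, h1]
    · rw [mul_assoc, ← mul_assoc x', h2, one_mul, h4]
  | mem x hx =>
    obtain ⟨i, hi, rfl⟩ := hx
    exact ⟨g i, mem_parab g hi, h.sq i hi, h.sq i hi⟩

theorem adj_coxRel (n : ℕ) : CoxRel (adj n) (n - 1) where
  sq i hi := by
    rw [adj_val hi, swap_mul_self]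
  comm i hi j hj hij := by
    rw [adj_val hi, adj_val hj]
    exact swap_far (Or.inl hij)
  braid i hi := by
    rw [adj_val hi, adj_val (show i < n - 1 by omega), mul_assoc, mul_assoc]
    exact swap_near (Or.inl rfl)

/-- Elements satisfying the Coxeter relations define a homomorphism from the symmetric group. -/
theorem exists_hom (m : ℕ) (s : ℕ → M) (hs : CoxRel s m) :
    ∃ φ : Perm (Fin (m + 1)) →* M, ∀ i < m, φ (adj (m + 1) i) = s i := by
  have ha := adj_coxRel (m + 1)
  have h : CoxRel (fun i => (s i, adj (m + 1) i)) m :=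
    ⟨fun i hi => Prod.ext (hs.sq i hi) (ha.sq i hi),
      fun i hi j hj hij => Prod.ext (hs.comm i hi j hj hij) (ha.comm i hi j hj hij),
      fun i hi => Prod.ext (hs.braid i hi) (ha.braid i hi)⟩
  set P := parab (fun i => (s i, adj (m + 1) i)) m with hP
  have hex : ∀ σ : Perm (Fin (m + 1)), ∃ a, (a, σ) ∈ P := by
    intro σ
    have : σ ∈ P.map (MonoidHom.snd M (Perm (Fin (m + 1)))) := by
      have htop := Perm.mclosure_swap_castSucc_succ m
      have hle : Submonoid.closure (Set.range fun i : Fin m ↦ swap i.castSucc i.succ) ≤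
          P.map (MonoidHom.snd M (Perm (Fin (m + 1)))) := by
        rw [Submonoid.closure_le]
        rintro _ ⟨i, rfl⟩
        exact ⟨_, mem_parab _ i.isLt, adj_val i.isLt⟩
      rw [htop] at hle
      exact hle trivial
    obtain ⟨⟨a, τ⟩, hmem, rfl⟩ := this
    exact ⟨a, hmem⟩
  have huniq : ∀ σ a b, (a, σ) ∈ P → (b, σ) ∈ P → a = b := by
    intro σ a b h1 h2
    obtain ⟨⟨c, τ⟩, hy, h3, h4⟩ := parab_inv h h2
    have h5 : σ * τ = 1 := congrArg Prod.snd h3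
    have h6 := parab_ker s m le_rfl h _ (mul_mem h1 hy) h5
    have h7 : a * c = 1 := congrArg Prod.fst h6
    have h8 : c * b = 1 := congrArg Prod.fst h4
    calc a = a * (c * b) := by rw [h8, mul_one]
      _ = b := by rw [← mul_assoc, h7, one_mul]
  choose f hf using hex
  refine ⟨{ toFun := f
            map_one' := huniq 1 _ _ (hf 1) (one_mem P)
            map_mul' := fun σ τ => huniq (σ * τ) _ _ (hf _) (mul_mem (hf σ) (hf τ)) }, ?_⟩
  intro i hi
  exact huniq _ _ _ (hf _) (mem_parab (fun i => (s i, adj (m + 1) i)) hi)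

end Coxeter

/-! ### Extended generators from the defining relations -/

section Construct

variable {m : ℕ} {M : Type*} [Monoid M]

/-- A submonoid containing all adjacent transpositions contains all permutations. -/
theorem perm_mem_of_adj (H : Submonoid (Perm (Fin (m + 1))))
    (h : ∀ i : Fin (m + 1 - 1), swap (lo i) (hi i) ∈ H) (σ) : σ ∈ H := by
  have hle : Submonoid.closure (Set.range fun i : Fin m ↦ swap i.castSucc i.succ) ≤ H := by
    rw [Submonoid.closure_le]
    rintro _ ⟨i, rfl⟩
    exact h i
  rw [Perm.mclosure_swap_castSucc_succ] at hle
  exact hle trivial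

/-- A permutation fixing the first two points is a product of transpositions of the others. -/
theorem stab_mem {n : ℕ} (H : Subgroup (Perm (Fin n)))
    (h : ∀ i : Fin (n - 1), 2 ≤ i.val → swap (lo i) (hi i) ∈ H) (σ : Perm (Fin n))
    (hσ : ∀ i : Fin n, i.val < 2 → σ i = i) : σ ∈ H := by
  have hsw : ∀ d : ℕ, ∀ a b : Fin n, 2 ≤ a.val → b.val = a.val + d + 1 → swap a b ∈ H := by
    intro d
    induction d with
    | zero =>
      intro a b ha hb
      have h' := h ⟨a.val, by omega⟩ ha
      have e1 : lo (⟨a.val, by omega⟩ : Fin (n - 1)) = a := rfl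
      have e2 : hi (⟨a.val, by omega⟩ : Fin (n - 1)) = b := Fin.ext hb.symm
      rwa [e1, e2] at h'
    | succ d ih =>
      intro a b ha hb
      let c : Fin n := ⟨a.val + d + 1, by omega⟩
      have h1 := ih a c ha rfl
      have h2 : swap c b ∈ H := by
        have h' := h ⟨c.val, by simp only [c]; omega⟩ (by simp only [c]; omega)
        have e2 : hi (⟨c.val, by simp only [c]; omega⟩ : Fin (n - 1)) = b := by
          apply Fin.ext; simp only [hi, c]; omega
        rw [e2] at h'
        exact h'
      have h3 := mul_mem (mul_mem h2 h1) h2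
      rwa [swap_mul_swap_mul_swap (by simp [c, Fin.ext_iff]; omega)
        (by simp [Fin.ext_iff]; omega), swap_comm] at h3
  let S : Set (Perm (Fin n)) := {τ | ∃ a b : Fin n, a ≠ b ∧ 2 ≤ a.val ∧ 2 ≤ b.val ∧ τ = swap a b}
  have hSH : Subgroup.closure S ≤ H := by
    rw [Subgroup.closure_le]
    rintro _ ⟨a, b, hab, ha, hb, rfl⟩
    have hab' : a.val ≠ b.val := fun h => hab (Fin.ext h)
    rcases lt_or_gt_of_ne hab' with hlt | hlt
    · exact hsw (b.val - a.val - 1) a b ha (by omega)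
    · rw [swap_comm]; exact hsw (a.val - b.val - 1) b a hb (by omega)
  apply hSH
  rw [mem_closure_isSwap]
  · refine ⟨Set.toFinite _, fun x => ?_⟩
    by_cases hx : σ x = x
    · rw [hx]; exact MulAction.mem_orbit_self _
    · have hx2 : 2 ≤ x.val := by
        by_contra hlt
        exact hx (hσ x (by omega))
      have hx3 : 2 ≤ (σ x).val := by
        by_contra hlt
        exact hx (σ.injective (hσ (σ x) (by omega)))
      refine ⟨⟨swap x (σ x), Subgroup.subset_closure ⟨x, σ x, Ne.symm hx, hx2, hx3, rfl⟩⟩, ?_⟩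
      exact swap_apply_left _ _
  · rintro _ ⟨a, b, hab, _, _, rfl⟩
    exact ⟨a, b, hab, rfl⟩

/-- The symmetric group acts transitively on tuples of distinct points. -/
theorem exists_perm {n k : ℕ} (y : Fin k → Fin n) (hy : Function.Injective y) :
    ∃ (h : k ≤ n) (σ : Perm (Fin n)), ∀ a, σ (Fin.castLE h a) = y a := by
  have hk : k ≤ n := by simpa using Fintype.card_le_of_injective y hy
  refine ⟨hk, ?_⟩
  have := Perm.isMultiplyPretransitive (Fin n) k
  rw [MulAction.isMultiplyPretransitive_iff] at this
  obtain ⟨σ, hσ⟩ := @this (Fin.castLEEmb hk) ⟨y, hy⟩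
  exact ⟨σ, fun a => DFunLike.congr_fun hσ a⟩

theorem phi_cancel {G : Type*} [Group G] (φ : G →* M) (σ : G) {a b : M}
    (h : a * φ σ = b * φ σ) : a = b := by
  have := congrArg (· * φ σ⁻¹) h
  simpa only [mul_assoc, ← map_mul, mul_inv_cancel, map_one, mul_one] using this

/-- Identities are transported along conjugation by invertible elements. -/
theorem transfer {G : Type*} [Group G] {φ : G →* M} {σ : G} {X X' Y Y' : M}
    (h : X = X') (h1 : SemiconjBy (φ σ) X Y) (h2 : SemiconjBy (φ σ) X' Y') : Y = Y' := by
  apply phi_cancel φ σ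
  rw [← h1.eq, ← h2.eq, h]

/-- By the Coxeter presentation, the relations between the `s_i` extend them to a homomorphism. -/
theorem exists_phi (g : SEQO (m + 1) → M)
    (hg : ∀ u v, RelSEQO (m + 1) u v → (u.map g).prod = (v.map g).prod) :
    ∃ φ : Perm (Fin (m + 1)) →* M, ∀ i, φ (swap (lo i) (hi i)) = g (.s i) := by
  let s : ℕ → M := fun i => if h : i < m then g (.s ⟨i, h⟩) else 1
  have hs : ∀ i (h : i < m), s i = g (.s ⟨i, h⟩) := fun i h => dif_pos h
  obtain ⟨φ, hφ⟩ := exists_hom m s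
    ⟨fun i hi => by
        rw [hs i hi]; simpa using hg _ _ (.r18 ⟨i, hi⟩),
      fun i hi j hj hij => by
        rw [hs i hi, hs j hj]; simpa using hg _ _ (.r19 ⟨i, hi⟩ ⟨j, hj⟩ (Or.inl hij)),
      fun i hi => by
        rw [hs i (by omega), hs (i + 1) hi]
        simpa [mul_assoc] using hg _ _ (.r20 ⟨i, by omega⟩ ⟨i + 1, hi⟩ (Or.inl rfl))⟩
  refine ⟨φ, fun i => ?_⟩
  have := hφ i.val i.isLt
  rw [hs i.val i.isLt, adj_val i.isLt] at this
  exact this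

/-- The elements `t_ij` for arbitrary `i, j`, as conjugates of `q_1`. They are well defined because
`q_1` commutes with the permutations which fix the first two points. -/
theorem exists_t (g : SEQO (m + 1) → M)
    (hg : ∀ u v, RelSEQO (m + 1) u v → (u.map g).prod = (v.map g).prod)
    (φ : Perm (Fin (m + 1)) →* M) (hφ : ∀ i, φ (swap (lo i) (hi i)) = g (.s i)) :
    ∃ t : Fin (m + 1) → Fin (m + 1) → M, (∀ i, t i i = 1) ∧
      (∀ k, t (lo k) (hi k) = g (.q k)) ∧
      ∀ σ i j, SemiconjBy (φ σ) (t i j) (t (σ i) (σ j)) := by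
  classical
  rcases Nat.eq_zero_or_pos m with rfl | hm
  · exact ⟨fun _ _ => 1, fun _ => rfl, fun k => k.elim0, fun σ i j => SemiconjBy.one_right _⟩
  let z : Fin (m + 1 - 1) := ⟨0, hm⟩
  let q := g (.q z)
  let H : Subgroup (Perm (Fin (m + 1))) :=
    { carrier := {σ | φ σ * q = q * φ σ}
      one_mem' := by simp
      mul_mem' := by
        intro σ τ (h1 : _ = _) (h2 : _ = _)
        show _ = _
        rw [map_mul, mul_assoc, h2, ← mul_assoc, h1, mul_assoc]
      inv_mem' := by
        intro σ (h1 : _ = _)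
        show _ = _
        apply phi_cancel φ σ
        rw [mul_assoc, mul_assoc, ← h1, ← mul_assoc, ← map_mul]
        simp }
  have hH : ∀ σ : Perm (Fin (m + 1)), σ (lo z) = lo z → σ (hi z) = hi z → φ σ * q = q * φ σ := by
    intro σ h0 h1
    refine stab_mem H (fun i h2i => ?_) σ (fun i h2i => ?_)
    · show _ = _
      rw [hφ]
      simpa using hg _ _ (.r28 i z (Or.inr (by simp only [z]; omega)))
    · have : i = lo z ∨ i = hi z := by
        simp only [lo, hi, z, Fin.ext_iff]; omega
      rcases this with rfl | rfl <;> assumption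
  have hex : ∀ i j : Fin (m + 1), i ≠ j →
      ∃ σ : Perm (Fin (m + 1)), σ (lo z) = i ∧ σ (hi z) = j := by
    intro i j hij
    obtain ⟨h, σ, hσ⟩ := exists_perm ![i, j] (by
      intro a b hab
      fin_cases a <;> fin_cases b <;> simp_all)
    exact ⟨σ, hσ 0, hσ 1⟩
  choose! s hs using hex
  let t : Fin (m + 1) → Fin (m + 1) → M := fun i j =>
    if i = j then 1 else φ (s i j) * q * φ (s i j)⁻¹
  have ht : ∀ i j σ, i ≠ j → σ (lo z) = i → σ (hi z) = j → φ σ * q = t i j * φ σ := by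
    intro i j σ hij h0 h1
    have hst := hH ((s i j)⁻¹ * σ)
      (by rw [Perm.mul_apply, h0, Perm.inv_eq_iff_eq, (hs i j hij).1])
      (by rw [Perm.mul_apply, h1, Perm.inv_eq_iff_eq, (hs i j hij).2])
    have h2 := congrArg (φ (s i j) * ·) hst
    simp only [t, if_neg hij]
    rw [mul_assoc, ← map_mul, mul_assoc, ← hst, ← mul_assoc, ← map_mul, mul_inv_cancel_left]
  have hself : ∀ i, t i i = 1 := fun i => if_pos rfl
  have hconj : ∀ σ i j, SemiconjBy (φ σ) (t i j) (t (σ i) (σ j)) := by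
    intro σ i j
    rcases eq_or_ne i j with rfl | hij
    · rw [hself, hself]; exact SemiconjBy.one_right _
    · obtain ⟨h0, h1⟩ := hs i j hij
      have e1 := ht i j (s i j) hij h0 h1
      have e2 := ht (σ i) (σ j) (σ * s i j) (σ.injective.ne hij)
        (by rw [Perm.mul_apply, h0]) (by rw [Perm.mul_apply, h1])
      apply phi_cancel φ (s i j)
      rw [mul_assoc, ← e1, mul_assoc, ← map_mul, ← e2, map_mul, mul_assoc]
  refine ⟨t, hself, ?_, hconj⟩
  rintro ⟨k, hk⟩
  induction k with
  | zero =>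
    have := ht (lo z) (hi z) 1 (lo_ne_hi z) rfl rfl
    rw [map_one, one_mul, mul_one] at this
    exact this.symm
  | succ k ih =>
    have hk' : k < m + 1 - 1 := by omega
    have e1 := ih hk'
    have e2 := hg _ _ (.r29 ⟨k, hk'⟩ ⟨k + 1, hk⟩ (Or.inl rfl))
    simp only [List.map_cons, List.map_nil, List.prod_cons, List.prod_nil, mul_one, ← hφ,
      ← map_mul, ← mul_assoc] at e2
    rw [← e1, (hconj _ _ _).eq] at e2
    have e3 := phi_cancel φ _ e2
    rw [← e3]
    have hl : lo (⟨k + 1, hk⟩ : Fin (m + 1 - 1)) = hi ⟨k, hk'⟩ := rfl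
    congr 1
    · rw [Perm.mul_apply, hl, swap_apply_of_ne_of_ne (lo_ne_hi _)
        (lo_ne_hi_of_lt (by simp only; omega)), swap_apply_left]
    · rw [Perm.mul_apply, hl, swap_apply_left, swap_apply_of_ne_of_ne]
      · exact (lo_ne_hi_of_lt (by simp only; omega)).symm
      · rw [← hl]; exact (lo_ne_hi _).symm

end Construct

section Construct2

variable {m : ℕ} {M : Type*} [Monoid M]

/-- Equivariance under all permutations follows from equivariance under adjacent transpositions. -/
theorem semiconj_of_adj (φ : Perm (Fin (m + 1)) →* M) (f : Fin (m + 1) → M)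
    (h1 : ∀ i j, j ≠ lo i ∧ j ≠ hi i →
      φ (swap (lo i) (hi i)) * f j = f j * φ (swap (lo i) (hi i)))
    (h2 : ∀ i, φ (swap (lo i) (hi i)) * f (lo i) = f (hi i) * φ (swap (lo i) (hi i)))
    (σ j) : SemiconjBy (φ σ) (f j) (f (σ j)) := by
  let H : Submonoid (Perm (Fin (m + 1))) :=
    { carrier := {σ | ∀ j, SemiconjBy (φ σ) (f j) (f (σ j))}
      one_mem' := by
        intro j
        rw [map_one]
        exact SemiconjBy.one_left _
      mul_mem' := by
        intro σ τ hσ hτ j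
        rw [map_mul]
        exact (hσ (τ j)).mul_left (hτ j) }
  refine perm_mem_of_adj H (fun i j => ?_) σ j
  by_cases hl : j = lo i
  · subst hl
    rw [swap_apply_left]
    exact h2 i
  by_cases hh : j = hi i
  · subst hh
    rw [swap_apply_right]
    apply phi_cancel φ (swap (lo i) (hi i))
    rw [mul_assoc, ← h2, ← mul_assoc, mul_assoc (f _), ← map_mul, swap_mul_self, map_one, one_mul,
      mul_one]
  rw [swap_apply_of_ne_of_ne hl hh]
  exact h1 i j ⟨hl, hh⟩

theorem pick2 (i j : Fin (m + 1)) (hij : i ≠ j) :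
    ∃ (k : Fin (m + 1 - 1)) (σ : Perm (Fin (m + 1))), σ (lo k) = i ∧ σ (hi k) = j := by
  obtain ⟨h, σ, hσ⟩ := exists_perm ![i, j] (by
    intro a b hab
    fin_cases a <;> fin_cases b <;> simp_all)
  exact ⟨⟨0, by omega⟩, σ, hσ 0, hσ 1⟩

theorem pick3 (i j l : Fin (m + 1)) (hij : i ≠ j) (hjl : j ≠ l) (hil : i ≠ l) :
    ∃ (k k' : Fin (m + 1 - 1)) (σ : Perm (Fin (m + 1))), k.val + 1 = k'.val ∧
      σ (lo k) = i ∧ σ (hi k) = j ∧ σ (hi k') = l := by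
  obtain ⟨h, σ, hσ⟩ := exists_perm ![i, j, l] (by
    intro a b hab
    fin_cases a <;> fin_cases b <;> simp_all)
  exact ⟨⟨0, by omega⟩, ⟨1, by omega⟩, σ, rfl, hσ 0, hσ 1, hσ 2⟩

theorem pick4 (i j k l : Fin (m + 1)) (hij : i ≠ j) (hik : i ≠ k) (hil : i ≠ l) (hjk : j ≠ k)
    (hjl : j ≠ l) (hkl : k ≠ l) :
    ∃ (a b : Fin (m + 1 - 1)) (σ : Perm (Fin (m + 1))), a ≠ b ∧
      σ (lo a) = i ∧ σ (hi a) = j ∧ σ (lo b) = k ∧ σ (hi b) = l := by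
  obtain ⟨h, σ, hσ⟩ := exists_perm ![i, j, k, l] (by
    intro a b hab
    fin_cases a <;> fin_cases b <;> simp_all)
  exact ⟨⟨0, by omega⟩, ⟨2, by omega⟩, σ, by simp, hσ 0, hσ 1, hσ 2, hσ 3⟩

/-- The elements `t_pq` for `p, q` in `[n]` extended by one point. -/
def tOpt (o : Fin (m + 1) → M) (t : Fin (m + 1) → Fin (m + 1) → M) :
    Option (Fin (m + 1)) → Option (Fin (m + 1)) → M
  | none, none => 1
  | none, some i => o i
  | some i, none => o i
  | some i, some j => t i j

/-- The defining relations imply the relations between extended generators. Most of these are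
defining relations at adjacent indices, transported by `transfer` along a permutation moving the
adjacent indices to the given ones. -/
theorem exists_sys (g : SEQO (m + 1) → M)
    (hg : ∀ u v, RelSEQO (m + 1) u v → (u.map g).prod = (v.map g).prod) :
    ∃ D : RookSys (m + 1) M, D.letter = g := by
  obtain ⟨φ, hφ⟩ := exists_phi g hg
  obtain ⟨t, t_self, t_q, t_sc⟩ := exists_t g hg φ hφ
  let e : Fin (m + 1) → M := fun i => g (.e i)
  let o : Fin (m + 1) → M := fun i => g (.o i)
  have e_sc : ∀ σ j, SemiconjBy (φ σ) (e j) (e (σ j)) :=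
    semiconj_of_adj φ e (fun i j h => by rw [hφ]; simpa using hg _ _ (.r23 i j h))
      (fun i => by rw [hφ]; simpa using hg _ _ (.r24 i))
  have o_sc : ∀ σ j, SemiconjBy (φ σ) (o j) (o (σ j)) :=
    semiconj_of_adj φ o (fun i j h => by rw [hφ]; simpa using hg _ _ (.r36 i j h))
      (fun i => by rw [hφ]; simpa using hg _ _ (.r37 i))
  have p_sc : ∀ σ i j, SemiconjBy (φ σ) (φ (swap i j)) (φ (swap (σ i) (σ j))) := by
    intro σ i j
    show _ * _ = _ * _
    rw [← map_mul, ← map_mul, mul_swap_eq_swap_mul]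
  have t_idem : ∀ i j, t i j * t i j = t i j := by
    intro i j
    rcases eq_or_ne i j with rfl | hij
    · rw [t_self, mul_one]
    obtain ⟨k, σ, rfl, rfl⟩ := pick2 i j hij
    exact transfer (σ := σ) (X := t (lo k) (hi k) * t (lo k) (hi k)) (X' := t (lo k) (hi k))
      (by rw [t_q]; simpa using hg _ _ (.r26 k)) ((t_sc _ _ _).mul_right (t_sc _ _ _)) (t_sc _ _ _)
  have tφ : ∀ i j, t i j * φ (swap i j) = t i j := by
    intro i j
    rcases eq_or_ne i j with rfl | hij
    · rw [swap_self, ← Perm.one_def, map_one, mul_one]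
    obtain ⟨k, σ, rfl, rfl⟩ := pick2 i j hij
    exact transfer (σ := σ) (X := t (lo k) (hi k) * φ (swap (lo k) (hi k))) (X' := t (lo k) (hi k))
      (by rw [t_q, hφ]; simpa using hg _ _ (.r30a k)) ((t_sc _ _ _).mul_right (p_sc _ _ _))
      (t_sc _ _ _)
  have φt : ∀ i j, φ (swap i j) * t i j = t i j := by
    intro i j
    rcases eq_or_ne i j with rfl | hij
    · rw [swap_self, ← Perm.one_def, map_one, one_mul]
    obtain ⟨k, σ, rfl, rfl⟩ := pick2 i j hij
    exact transfer (σ := σ) (X := φ (swap (lo k) (hi k)) * t (lo k) (hi k)) (X' := t (lo k) (hi k))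
      (by rw [t_q, hφ]; simpa using hg _ _ (.r30b k)) ((p_sc _ _ _).mul_right (t_sc _ _ _))
      (t_sc _ _ _)
  have t_symm : ∀ i j, t i j = t j i := by
    intro i j
    apply phi_cancel φ (swap i j)
    have := (t_sc (swap i j) i j).eq
    rw [swap_apply_left, swap_apply_right] at this
    rw [tφ, ← this, φt]
  have t_comm3 : ∀ i j k, i ≠ j → j ≠ k → i ≠ k → t i j * t j k = t j k * t i j := by
    intro i j k h1 h2 h3
    obtain ⟨a, b, σ, hab, rfl, rfl, rfl⟩ := pick3 i j k h1 h2 h3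
    refine transfer (σ := σ) (X := t (lo a) (hi a) * t (hi a) (hi b))
      (X' := t (hi a) (hi b) * t (lo a) (hi a)) ?_ ((t_sc _ _ _).mul_right (t_sc _ _ _))
      ((t_sc _ _ _).mul_right (t_sc _ _ _))
    rw [hi_eq_lo hab, ← hi_eq_lo hab, t_q, hi_eq_lo hab, t_q]
    have hne : a ≠ b := fun h => by subst h; omega
    simpa using hg _ _ (.r27 a b hne)
  have t_comm : ∀ i j k l, t i j * t k l = t k l * t i j := by
    intro i j k l
    rcases eq_or_ne i j with rfl | hij
    · simp [t_self]
    rcases eq_or_ne k l with rfl | hkl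
    · simp [t_self]
    by_cases hik : i = k
    · subst hik
      by_cases hjl : j = l
      · rw [hjl]
      · rw [t_symm i j]; exact t_comm3 j i l hij.symm hkl (hjl)
    by_cases hil : i = l
    · subst hil
      by_cases hjk : j = k
      · rw [hjk, t_symm i k]
      · rw [t_symm i j, t_symm k i]; exact t_comm3 j i k hij.symm hkl.symm hjk
    by_cases hjk : j = k
    · subst hjk; exact t_comm3 i j l hij hkl hil
    by_cases hjl : j = l
    · subst hjl; rw [t_symm k j]; exact t_comm3 i j k hij hkl.symm hik
    obtain ⟨a, b, σ, hab, rfl, rfl, rfl, rfl⟩ := pick4 i j k l hij hik hil hjk hjl hkl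
    exact transfer (σ := σ) (X := t (lo a) (hi a) * t (lo b) (hi b))
      (X' := t (lo b) (hi b) * t (lo a) (hi a))
      (by rw [t_q, t_q]; simpa using hg _ _ (.r27 a b hab)) ((t_sc _ _ _).mul_right (t_sc _ _ _))
      ((t_sc _ _ _).mul_right (t_sc _ _ _))
  have t_trans : ∀ i j k, t i j * t j k = t i j * t i k := by
    intro i j k
    rcases eq_or_ne i j with rfl | hij
    · rfl
    rcases eq_or_ne j k with rfl | hjk
    · rw [t_self, mul_one, t_idem]
    rcases eq_or_ne i k with rfl | hik
    · rw [t_self, mul_one, t_symm j i, t_idem]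
    have h := (t_sc (swap i j) i k).eq
    rw [swap_apply_left, swap_apply_of_ne_of_ne hik.symm hjk.symm] at h
    calc t i j * t j k = t j k * (t i j * φ (swap i j)) := by rw [tφ, t_comm]
      _ = t i j * (φ (swap i j) * t i k) := by rw [h, ← mul_assoc, ← mul_assoc, t_comm]
      _ = t i j * t i k := by rw [← mul_assoc, tφ]
  have t_o : ∀ i j k, t i j * o k = o k * t i j := by
    intro i j k
    rcases eq_or_ne i j with rfl | hij
    · simp [t_self]
    obtain ⟨a, σ, rfl, rfl⟩ := pick2 i j hij
    obtain ⟨k, rfl⟩ := σ.surjective k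
    exact transfer (σ := σ) (X := t (lo a) (hi a) * o k) (X' := o k * t (lo a) (hi a))
      (by rw [t_q]; simpa using hg _ _ (.r42 a k)) ((t_sc _ _ _).mul_right (o_sc _ _))
      ((o_sc _ _).mul_right (t_sc _ _ _))
  have o_o : ∀ i j, o i * o j = o j * o i := by
    intro i j
    rcases eq_or_ne i j with rfl | hij
    · rfl
    · simpa using hg _ _ (.r35 i j hij)
  have o_idem : ∀ i, o i * o i = o i := fun i => by simpa using hg _ _ (.r34 i)
  have t_oa : ∀ i j, t i j * o i = o i * o j := by
    intro i j
    rcases eq_or_ne i j with rfl | hij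
    · rw [t_self, one_mul, o_idem]
    obtain ⟨a, σ, rfl, rfl⟩ := pick2 i j hij
    exact transfer (σ := σ) (X := t (lo a) (hi a) * o (lo a)) (X' := o (lo a) * o (hi a))
      (by rw [t_q]; simpa using hg _ _ (.r43a a)) ((t_sc _ _ _).mul_right (o_sc _ _))
      ((o_sc _ _).mul_right (o_sc _ _))
  have e_t : ∀ i j k, j ≠ i → k ≠ i → e i * t j k = t j k * e i := by
    intro i j k h1 h2
    rcases eq_or_ne j k with rfl | hjk
    · simp [t_self]
    obtain ⟨a, σ, rfl, rfl⟩ := pick2 j k hjk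
    obtain ⟨i, rfl⟩ := σ.surjective i
    have h : i ≠ lo a ∧ i ≠ hi a := ⟨fun h => h1 (by rw [h]), fun h => h2 (by rw [h])⟩
    exact transfer (σ := σ) (X := e i * t (lo a) (hi a)) (X' := t (lo a) (hi a) * e i)
      (by rw [t_q]; simpa using (hg _ _ (.r31 a i h)).symm) ((e_sc _ _).mul_right (t_sc _ _ _))
      ((t_sc _ _ _).mul_right (e_sc _ _))
  refine ⟨
    { φ := φ
      e := e
      t := tOpt o t
      φ_e := fun σ i => (e_sc σ i).eq
      φ_t := ?_
      e_comm := ?_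
      e_idem := fun i => by simpa using hg _ _ (.r21 i)
      t_self := ?_
      t_symm := ?_
      t_idem := ?_
      t_comm := ?_
      t_trans := ?_
      e_t := ?_
      ete := ?_
      tet := ?_
      eeφ := ?_
      tφ := tφ }, ?_⟩
  · rintro σ (_ | i) (_ | j) <;> simp only [tOpt, Option.map_none, Option.map_some, mul_one, one_mul]
    · exact (o_sc _ _).eq
    · exact (o_sc _ _).eq
    · exact (t_sc _ _ _).eq
  · intro i j
    rcases eq_or_ne i j with rfl | hij
    · rfl
    · simpa using hg _ _ (.r22 i j hij)
  · rintro (_ | i)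
    · rfl
    · exact t_self i
  · rintro (_ | i) (_ | j)
    · rfl
    · rfl
    · rfl
    · exact t_symm i j
  · rintro (_ | i) (_ | j)
    · exact mul_one _
    · exact o_idem j
    · exact o_idem i
    · exact t_idem i j
  · rintro (_ | i) (_ | j) (_ | k) (_ | l) <;>
      simp only [tOpt, mul_one, one_mul]
    all_goals first
      | exact o_o _ _
      | exact t_o _ _ _
      | exact (t_o _ _ _).symm
      | exact t_comm _ _ _ _
  · rintro (_ | i) (_ | j) (_ | k) <;> simp only [tOpt, mul_one, one_mul]
    · rw [o_idem]
    · rw [← t_o, t_oa]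
    · rw [o_idem]
    · rw [← t_o, t_oa]
    · rw [t_oa i j, t_symm, t_oa, o_o]
    · exact t_trans i j k
  · have e_o : ∀ i k, k ≠ i → e i * o k = o k * e i := fun i k h => by
      simpa using (hg _ _ (.r39 k i h)).symm
    rintro i (_ | j) (_ | k) h1 h2 <;> simp only [tOpt, mul_one, one_mul]
    · exact e_o i k (fun h => h2 (by rw [h]))
    · exact e_o i j (fun h => h1 (by rw [h]))
    · exact e_t i j k (fun h => h1 (by rw [h])) (fun h => h2 (by rw [h]))
  · rintro i (_ | j) h
    · simpa [mul_assoc, tOpt] using hg _ _ (.r41 i)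
    · have hij : i ≠ j := fun h' => h (by rw [h'])
      obtain ⟨a, σ, rfl, rfl⟩ := pick2 i j hij
      exact transfer (σ := σ) (X := e (lo a) * t (lo a) (hi a) * e (lo a)) (X' := e (lo a))
        (by rw [t_q]; simpa [mul_assoc] using hg _ _ (.r33 a (lo a) (Or.inl rfl)))
        (((e_sc _ _).mul_right (t_sc _ _ _)).mul_right (e_sc _ _)) (e_sc _ _)
  · rintro i (_ | j) h
    · simpa [mul_assoc, tOpt] using hg _ _ (.r40 i)
    · have hij : i ≠ j := fun h' => h (by rw [h'])
      obtain ⟨a, σ, rfl, rfl⟩ := pick2 i j hij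
      exact transfer (σ := σ) (X := t (lo a) (hi a) * e (lo a) * t (lo a) (hi a))
        (X' := t (lo a) (hi a))
        (by rw [t_q]; simpa [mul_assoc] using hg _ _ (.r32 a (lo a) (Or.inl rfl)))
        (((t_sc _ _ _).mul_right (e_sc _ _)).mul_right (t_sc _ _ _)) (t_sc _ _ _)
  · intro i j hij
    obtain ⟨a, σ, rfl, rfl⟩ := pick2 i j hij
    exact transfer (σ := σ) (X := e (lo a) * e (hi a) * φ (swap (lo a) (hi a)))
      (X' := e (lo a) * e (hi a))
      (by rw [hφ]; simpa [mul_assoc] using hg _ _ (.r25 a))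
      (((e_sc _ _).mul_right (e_sc _ _)).mul_right (p_sc _ _ _))
      ((e_sc _ _).mul_right (e_sc _ _))
  · funext a
    cases a with
    | s i => exact hφ i
    | e i => rfl
    | q i => exact t_q i
    | o i => rfl

end Construct2

/-! ### Normal forms -/

section Idem

variable {ι M : Type*} [Monoid M] {c : ι → M}

theorem gen_comm (hc : ∀ i j, c i * c j = c j * c i) {X : M}
    (hX : X ∈ Submonoid.closure (Set.range c)) (i : ι) : X * c i = c i * X := by
  induction hX using Submonoid.closure_induction with
  | mem x h => obtain ⟨j, rfl⟩ := h; exact hc j i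
  | one => simp
  | mul x y _ _ h1 h2 => rw [mul_assoc, h2, ← mul_assoc, h1, mul_assoc]

theorem gen_comm' (hc : ∀ i j, c i * c j = c j * c i) {X Y : M}
    (hX : X ∈ Submonoid.closure (Set.range c)) (hY : Y ∈ Submonoid.closure (Set.range c)) :
    X * Y = Y * X := by
  induction hY using Submonoid.closure_induction with
  | mem x h => obtain ⟨j, rfl⟩ := h; exact gen_comm hc hX j
  | one => simp
  | mul x y _ _ h1 h2 => rw [← mul_assoc, h1, mul_assoc, h2, mul_assoc]

/-- A product of commuting idempotents is a product of those idempotents which it absorbs. -/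
theorem gen_mem (hc : ∀ i j, c i * c j = c j * c i) (hi : ∀ i, c i * c i = c i) {X : M}
    (hX : X ∈ Submonoid.closure (Set.range c)) :
    X ∈ Submonoid.closure (c '' {i | X * c i = X}) := by
  induction hX using Submonoid.closure_induction with
  | mem x h => obtain ⟨j, rfl⟩ := h; exact Submonoid.subset_closure ⟨j, hi j, rfl⟩
  | one => exact one_mem _
  | mul x y hx hy h1 h2 =>
    refine mul_mem (Submonoid.closure_mono ?_ h1) (Submonoid.closure_mono ?_ h2)
    · rintro _ ⟨i, h, rfl⟩
      refine ⟨i, ?_, rfl⟩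
      show x * y * c i = x * y
      have h' : x * c i = x := h
      rw [mul_assoc, gen_comm hc hy, ← mul_assoc, h']
    · rintro _ ⟨i, h, rfl⟩
      refine ⟨i, ?_, rfl⟩
      show x * y * c i = x * y
      have h' : y * c i = y := h
      rw [mul_assoc, h']

theorem gen_mul (hc : ∀ i j, c i * c j = c j * c i) (hi : ∀ i, c i * c i = c i) {X Y : M}
    (hX : X ∈ Submonoid.closure (Set.range c))
    (h : ∀ i, X * c i = X → Y * c i = Y) : Y * X = Y := by
  have key : ∀ Z ∈ Submonoid.closure (c '' {i | X * c i = X}), Y * Z = Y := by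
    intro Z hZ
    induction hZ using Submonoid.closure_induction with
    | mem x hx => obtain ⟨j, hj, rfl⟩ := hx; exact h j hj
    | one => simp
    | mul x y _ _ h1 h2 => rw [← mul_assoc, h1, h2]
  exact key X (gen_mem hc hi hX)

theorem gen_eq (hc : ∀ i j, c i * c j = c j * c i) (hi : ∀ i, c i * c i = c i) {X Y : M}
    (hX : X ∈ Submonoid.closure (Set.range c)) (hY : Y ∈ Submonoid.closure (Set.range c))
    (h : ∀ i, X * c i = X ↔ Y * c i = Y) : X = Y := by
  rw [← gen_mul hc hi hY fun i => (h i).2, gen_comm' hc hX hY]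
  exact gen_mul hc hi hX fun i => (h i).1

end Idem

namespace RookSys

variable {n : ℕ} {M : Type*} [Monoid M] (D : RookSys n M)

/-- The submonoid generated by the `t_pq`. -/
def tM : Submonoid M := Submonoid.closure (Set.range fun pq : Option (Fin n) × Option (Fin n) =>
  D.t pq.1 pq.2)

/-- The submonoid generated by the `e_i`. -/
def eM : Submonoid M := Submonoid.closure (Set.range D.e)

theorem t_mem (p q) : D.t p q ∈ D.tM := Submonoid.subset_closure ⟨(p, q), rfl⟩

theorem e_mem (i) : D.e i ∈ D.eM := Submonoid.subset_closure ⟨i, rfl⟩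

theorem tM_comm {X} (hX : X ∈ D.tM) (p q) : X * D.t p q = D.t p q * X :=
  gen_comm (c := fun pq : Option (Fin n) × Option (Fin n) => D.t pq.1 pq.2)
    (fun _ _ => D.t_comm _ _ _ _) hX (p, q)

theorem eM_comm {W} (hW : W ∈ D.eM) (i) : W * D.e i = D.e i * W :=
  gen_comm D.e_comm hW i

theorem tM_eq {X Y} (hX : X ∈ D.tM) (hY : Y ∈ D.tM)
    (h : ∀ p q, X * D.t p q = X ↔ Y * D.t p q = Y) : X = Y :=
  gen_eq (c := fun pq : Option (Fin n) × Option (Fin n) => D.t pq.1 pq.2)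
    (fun _ _ => D.t_comm _ _ _ _) (fun _ => D.t_idem _ _) hX hY (fun _ => h _ _)

theorem eM_eq {X Y} (hX : X ∈ D.eM) (hY : Y ∈ D.eM)
    (h : ∀ i, X * D.e i = X ↔ Y * D.e i = Y) : X = Y :=
  gen_eq D.e_comm D.e_idem hX hY h

/-- The equivalence on `[n]` and the additional point given by the pairs `p, q` for which `X`
absorbs `t_pq`. -/
def ab (X : M) : Setoid (Option (Fin n)) where
  r p q := X * D.t p q = X
  iseqv :=
    { refl := fun p => by rw [D.t_self, mul_one]
      symm := fun {p q} h => by rw [D.t_symm, h]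
      trans := fun {p q r} h1 h2 => by
        have := congrArg (X * ·) (D.t_trans p q r)
        simp only [← mul_assoc, h1, h2] at this
        exact this.symm }

/-- The set of all `i` for which `W` absorbs `e_i`. -/
def supp (W : M) : Set (Fin n) := {i | W * D.e i = W}

theorem φ_tM (σ) {X} (hX : X ∈ D.tM) : ∃ Y ∈ D.tM, D.φ σ * X = Y * D.φ σ := by
  induction hX using Submonoid.closure_induction with
  | mem x h => obtain ⟨pq, rfl⟩ := h; exact ⟨_, D.t_mem _ _, D.φ_t _ _ _⟩
  | one => exact ⟨1, one_mem _, by simp⟩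
  | mul x y _ _ h1 h2 =>
    obtain ⟨x', hx, ex⟩ := h1
    obtain ⟨y', hy, ey⟩ := h2
    exact ⟨x' * y', mul_mem hx hy, by rw [← mul_assoc, ex, mul_assoc, ey, mul_assoc]⟩

theorem φ_eM (σ) {X} (hX : X ∈ D.eM) : ∃ Y ∈ D.eM, D.φ σ * X = Y * D.φ σ := by
  induction hX using Submonoid.closure_induction with
  | mem x h => obtain ⟨i, rfl⟩ := h; exact ⟨_, D.e_mem _, D.φ_e _ _⟩
  | one => exact ⟨1, one_mem _, by simp⟩
  | mul x y _ _ h1 h2 =>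
    obtain ⟨x', hx, ex⟩ := h1
    obtain ⟨y', hy, ey⟩ := h2
    exact ⟨x' * y', mul_mem hx hy, by rw [← mul_assoc, ex, mul_assoc, ey, mul_assoc]⟩

theorem φ_swap_sides {X Y : M} (σ : Perm (Fin n)) (h : D.φ σ⁻¹ * X = Y * D.φ σ⁻¹) :
    X * D.φ σ = D.φ σ * Y := by
  apply phi_cancel D.φ σ⁻¹
  rw [mul_assoc, ← map_mul, mul_inv_cancel, map_one, mul_one, mul_assoc, ← h, ← mul_assoc,
    ← map_mul, mul_inv_cancel, map_one, one_mul]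

theorem tM_φ (σ) {X} (hX : X ∈ D.tM) : ∃ Y ∈ D.tM, X * D.φ σ = D.φ σ * Y := by
  obtain ⟨Y, hY, h⟩ := D.φ_tM σ⁻¹ hX
  exact ⟨Y, hY, D.φ_swap_sides σ h⟩

theorem eM_φ (σ) {X} (hX : X ∈ D.eM) : ∃ Y ∈ D.eM, X * D.φ σ = D.φ σ * Y := by
  obtain ⟨Y, hY, h⟩ := D.φ_eM σ⁻¹ hX
  exact ⟨Y, hY, D.φ_swap_sides σ h⟩

theorem φ_mul_t (i j) : D.φ (swap i j) * D.t (some i) (some j) = D.t (some i) (some j) := by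
  rw [D.φ_t, Option.map_some, Option.map_some, swap_apply_left, swap_apply_right, D.t_symm, D.tφ]

theorem φ_mul_ee (i j) (h : i ≠ j) : D.φ (swap i j) * (D.e i * D.e j) = D.e i * D.e j := by
  rw [← mul_assoc, D.φ_e, mul_assoc, D.φ_e, swap_apply_left, swap_apply_right, ← mul_assoc,
    D.e_comm, D.eeφ i j h]

/-- An element of `tM` can be written with at most one generator involving `i`; the remaining factor
`Z` commutes with `e_i`. -/
theorem tM_split (i : Fin n) {Y} (hY : Y ∈ D.tM) :
    ∃ Z ∈ D.tM, Z * D.e i = D.e i * Z ∧ (Y = Z ∨ ∃ j, j ≠ some i ∧ Y = D.t (some i) j * Z) := by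
  induction hY using Submonoid.closure_induction_right with
  | one => exact ⟨1, one_mem _, by simp, Or.inl rfl⟩
  | mul_right Y hY y hy ih =>
    obtain ⟨⟨p, q⟩, rfl⟩ := hy
    obtain ⟨Z, hZ, hcomm, h⟩ := ih
    have hY : Y ∈ D.tM := hY
    have main : ∀ r, r ≠ some i → ∃ Z ∈ D.tM, Z * D.e i = D.e i * Z ∧
        (Y * D.t (some i) r = Z ∨ ∃ j, j ≠ some i ∧ Y * D.t (some i) r = D.t (some i) j * Z) := by
      intro r hr
      rcases h with rfl | ⟨j, hj, rfl⟩
      · exact ⟨Y, hZ, hcomm, Or.inr ⟨r, hr, D.tM_comm hZ _ _⟩⟩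
      · refine ⟨D.t j r * Z, mul_mem (D.t_mem _ _) hZ, ?_, Or.inr ⟨j, hj, ?_⟩⟩
        · rw [mul_assoc, hcomm, ← mul_assoc, ← D.e_t i j r hj hr, mul_assoc]
        · rw [mul_assoc, D.tM_comm hZ, ← mul_assoc, D.t_symm (some i) j, D.t_trans, mul_assoc]
    by_cases hp : p = some i
    · subst hp
      by_cases hq : q = some i
      · subst hq
        simp only [D.t_self, mul_one]
        exact ⟨Z, hZ, hcomm, h⟩
      · exact main q hq
    by_cases hq : q = some i
    · subst hq
      simp only [D.t_symm p]
      exact main p hp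
    refine ⟨Z * D.t p q, mul_mem hZ (D.t_mem _ _), ?_, ?_⟩
    · rw [mul_assoc, ← D.e_t i p q hp hq, ← mul_assoc, hcomm, mul_assoc]
    · rcases h with rfl | ⟨j, hj, rfl⟩
      · exact Or.inl rfl
      · exact Or.inr ⟨j, hj, mul_assoc _ _ _⟩

/-- `W` commutes with `t_pq` unless `p` or `q` is an index `i` such that `W` absorbs `e_i`. -/
theorem eM_t {W} (hW : W ∈ D.eM) (p q : Option (Fin n)) (hp : ∀ i ∈ D.supp W, p ≠ some i)
    (hq : ∀ i ∈ D.supp W, q ≠ some i) : W * D.t p q = D.t p q * W := by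
  have key : ∀ Z ∈ Submonoid.closure (D.e '' {i | W * D.e i = W}),
      Z * D.t p q = D.t p q * Z := by
    intro Z hZ
    induction hZ using Submonoid.closure_induction with
    | mem x hx => obtain ⟨j, hj, rfl⟩ := hx; exact D.e_t _ _ _ (hp j hj) (hq j hj)
    | one => simp
    | mul x y _ _ h1 h2 => rw [mul_assoc, h2, ← mul_assoc, h1, mul_assoc]
  exact key W (gen_mem D.e_comm D.e_idem hW)

/-- The elements of the form `X φ(σ) W Y` with `X, Y` in `tM` and `W` in `eM`. -/
def IsForm (a : M) : Prop :=
  ∃ X ∈ D.tM, ∃ σ, ∃ W ∈ D.eM, ∃ Y ∈ D.tM, a = X * D.φ σ * W * Y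

theorem isForm_one : D.IsForm 1 :=
  ⟨1, one_mem _, 1, 1, one_mem _, 1, one_mem _, by simp⟩

theorem isForm_mul_t {a} (h : D.IsForm a) (p q) : D.IsForm (a * D.t p q) := by
  obtain ⟨X, hX, σ, W, hW, Y, hY, rfl⟩ := h
  exact ⟨X, hX, σ, W, hW, Y * D.t p q, mul_mem hY (D.t_mem _ _), by simp only [mul_assoc]⟩

theorem isForm_mul_φ {a} (h : D.IsForm a) (τ) : D.IsForm (a * D.φ τ) := by
  obtain ⟨X, hX, σ, W, hW, Y, hY, rfl⟩ := h
  obtain ⟨Y', hY', e1⟩ := D.tM_φ τ hY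
  obtain ⟨W', hW', e2⟩ := D.eM_φ τ hW
  refine ⟨X, hX, σ * τ, W', hW', Y', hY', ?_⟩
  rw [mul_assoc, e1, mul_assoc, ← mul_assoc W, e2, map_mul]
  simp only [mul_assoc]

/-- After splitting `Y` at `i`, only the product `W t_ij e_i` has to be rewritten. If `W` absorbs
`e_i`, then `e_i t_ij e_i = e_i` removes `t_ij`; if `W` absorbs `e_j`, then
`e_j t_ij e_i = e_j φ(swap i j)`; otherwise `t_ij` moves left past `W` into `X`. -/
theorem isForm_mul_e {a} (h : D.IsForm a) (i) : D.IsForm (a * D.e i) := by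
  obtain ⟨X, hX, σ, W, hW, Y, hY, rfl⟩ := h
  obtain ⟨Z, hZ, hcomm, rfl | ⟨j, hj, rfl⟩⟩ := D.tM_split i hY
  · refine ⟨X, hX, σ, W * D.e i, mul_mem hW (D.e_mem _), Y, hY, ?_⟩
    rw [mul_assoc, hcomm]
    simp only [mul_assoc]
  have h0 : X * D.φ σ * W * (D.t (some i) j * Z) * D.e i =
      X * D.φ σ * (W * D.t (some i) j * D.e i) * Z := by
    simp only [mul_assoc, hcomm]
  rw [h0]
  by_cases hi : W * D.e i = W
  · refine ⟨X, hX, σ, W, hW, Z, hZ, ?_⟩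
    rw [← hi, mul_assoc W, mul_assoc W, D.ete i j hj]
  by_cases hj' : ∃ k ∈ D.supp W, j = some k
  · obtain ⟨k, hk, rfl⟩ := hj'
    have hk : W * D.e k = W := hk
    obtain ⟨W', hW', e2⟩ := D.eM_φ (swap i k) hW
    refine ⟨X, hX, σ * swap i k, W', hW', Z, hZ, ?_⟩
    have h1 : W * D.t (some i) (some k) * D.e i = W * D.φ (swap i k) := by
      have h2 : D.e k * (D.t (some i) (some k) * D.e i) = D.e k * D.φ (swap i k) := by
        have hsw := D.φ_e (swap i k) i
        rw [swap_apply_left] at hsw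
        rw [← D.φ_mul_t, mul_assoc, ← mul_assoc, ← hsw, mul_assoc, ← mul_assoc (D.e i),
          D.ete i _ hj]
      rw [← hk, mul_assoc, mul_assoc, h2, mul_assoc]
    rw [h1, e2, map_mul]
    simp only [mul_assoc]
  · have hc : W * D.t (some i) j = D.t (some i) j * W := by
      refine D.eM_t hW _ _ (fun k hk h => hi ?_) (fun k hk h => hj' ⟨k, hk, h⟩)
      obtain rfl := Option.some_injective _ h
      exact hk
    refine ⟨X * D.t (some (σ i)) (j.map σ), mul_mem hX (D.t_mem _ _), σ, W * D.e i,
      mul_mem hW (D.e_mem _), Z, hZ, ?_⟩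
    rw [hc]
    have := D.φ_t σ (some i) j
    simp only [Option.map_some] at this
    rw [mul_assoc X (D.t _ _), ← this]
    simp only [mul_assoc]

/-- A form is reduced if the points outside the support of `W`, together with the additional point,
lie in different classes of `ab Y`, and their images under `σ` in different classes of `ab X`. -/
def Reduced (X : M) (σ : Perm (Fin n)) (W Y : M) : Prop :=
  ∀ i j, i ∉ D.supp W → (∀ k ∈ D.supp W, j ≠ some k) → j ≠ some i →
    ¬ D.ab Y (some i) j ∧ ¬ D.ab X (some (σ i)) (j.map σ)

/-- If `i, j` violate reducedness, then `t_ij` can be inserted next to `W`, and `t_ij = t_ij e_i t_ij`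
allows replacing `W` by `e_i W`, which has a larger support. -/
theorem exists_reduced {a} (h : D.IsForm a) :
    ∃ X ∈ D.tM, ∃ σ, ∃ W ∈ D.eM, ∃ Y ∈ D.tM, a = X * D.φ σ * W * Y ∧ D.Reduced X σ W Y := by
  obtain ⟨X, hX, σ, W, hW, Y, hY, ha⟩ := h
  induction hk : (D.supp W)ᶜ.ncard using Nat.strong_induction_on generalizing X W Y with
  | _ m ih =>
    by_cases hr : D.Reduced X σ W Y
    · exact ⟨X, hX, σ, W, hW, Y, hY, ha, hr⟩
    have hr' : ∃ i j, i ∉ D.supp W ∧ (∀ k ∈ D.supp W, j ≠ some k) ∧ j ≠ some i ∧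
        (D.ab Y (some i) j ∨ D.ab X (some (σ i)) (j.map σ)) := by
      by_contra hcon
      push Not at hcon
      exact hr fun i j h1 h2 h3 => ⟨(hcon i j h1 h2 h3).1, (hcon i j h1 h2 h3).2⟩
    obtain ⟨i, j, hi, hj, hji, hab⟩ := hr'
    -- `t_ij` can be inserted between `φ(σ)` and `W`
    have hc : W * D.t (some i) j = D.t (some i) j * W :=
      D.eM_t hW _ _ (fun k hk h => hi (Option.some_injective _ h ▸ hk)) hj
    have hφ := D.φ_t σ (some i) j
    rw [Option.map_some] at hφ
    have hins : a = X * D.φ σ * (D.t (some i) j * W) * Y := by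
      rcases hab with h | h
      · have h : Y * D.t (some i) j = Y := h
        rw [← hc, mul_assoc, mul_assoc W, ← D.tM_comm hY, h, ← mul_assoc, ha]
      · have h : X * D.t (some (σ i)) (j.map σ) = X := h
        rw [← mul_assoc, mul_assoc X, hφ, ← mul_assoc, h, ha]
    have hW' : D.e i * W ∈ D.eM := mul_mem (D.e_mem _) hW
    have hlt : (D.supp (D.e i * W))ᶜ.ncard < m := by
      rw [← hk]
      refine Set.ncard_lt_ncard ?_ (Set.toFinite _)
      refine ⟨fun k hk hk' => hk ?_, fun hsub => hsub hi ?_⟩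
      · have hk' : W * D.e k = W := hk'
        show _ = _
        rw [mul_assoc, hk']
      · show _ = _
        rw [mul_assoc, D.eM_comm hW, ← mul_assoc, D.e_idem]
    refine ih _ hlt (X * D.t (some (σ i)) (j.map σ)) (mul_mem hX (D.t_mem _ _)) (D.e i * W) hW'
      (D.t (some i) j * Y) (mul_mem (D.t_mem _ _) hY) ?_ rfl
    calc a = X * D.φ σ * (D.t (some i) j * D.e i * D.t (some i) j * W) * Y := by
          rw [D.tet i j hji, hins]
      _ = X * (D.φ σ * D.t (some i) j) * (D.e i * (D.t (some i) j * W)) * Y := by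
          simp only [mul_assoc]
      _ = _ := by
          rw [hφ, ← hc]
          simp only [mul_assoc]

end RookSys

/-! ### Uniqueness of normal forms -/

/-- The colouring `x` is constant on the classes of `s`, the additional point being coloured
`false`. -/
def Resp {n : ℕ} (s : Setoid (Option (Fin n))) (x : Fin n → Bool) : Prop :=
  ∀ p q, s p q → xt x p = xt x q

/-- The indicator function of a class not containing the additional point is a respecting
colouring. -/
theorem resp_class {n : ℕ} (s : Setoid (Option (Fin n))) (i : Fin n) (h : ¬ s (some i) none) :
    ∃ x, Resp s x ∧ ∀ p, xt x p = true ↔ s p (some i) := by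
  classical
  have hx : ∀ p, xt (fun k => decide (s (some k) (some i))) p = true ↔ s p (some i) := by
    rintro (_ | k)
    · simp only [xt_none, Bool.false_eq_true, false_iff]
      exact fun h' => h (s.symm h')
    · simp
  refine ⟨_, fun p q hpq => ?_, hx⟩
  rw [Bool.eq_iff_iff, hx, hx]
  exact ⟨fun h => s.trans (s.symm hpq) h, fun h => s.trans hpq h⟩

theorem rel_iff_resp {n : ℕ} (s : Setoid (Option (Fin n))) (p q) :
    s p q ↔ ∀ x, Resp s x → xt x p = xt x q := by
  refine ⟨fun h x hx => hx p q h, fun h => ?_⟩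
  have main : ∀ i r, ¬ s (some i) none → (∀ x, Resp s x → xt x (some i) = xt x r) →
      s r (some i) := by
    intro i r hi hr
    obtain ⟨x, hx, hx'⟩ := resp_class s i hi
    exact (hx' r).1 (hr x hx ▸ (hx' _).2 (s.refl _))
  by_cases hp : s p none
  · by_cases hq : s q none
    · exact s.trans hp (s.symm hq)
    · rcases q with _ | i
      · exact hp
      · exact main i p hq fun x hx => (h x hx).symm
  · rcases p with _ | i
    · exact absurd (s.refl _) hp
    · exact s.symm (main i q hp h)

/-- A partial map with domain in a partial transversal of an equivalence, moving points within
their classes, extends to a permutation preserving all classes. -/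
theorem class_perm {n : ℕ} (S : Setoid (Fin n)) (P : Set (Fin n)) (f : Fin n → Fin n)
    (hf : ∀ j ∈ P, S j (f j)) (hP : ∀ j ∈ P, ∀ k ∈ P, S j k → j = k) :
    ∃ κ : Perm (Fin n), (∀ k, S k (κ k)) ∧ ∀ j ∈ P, κ j = f j := by
  classical
  have hinj : ∀ j ∈ P, ∀ k ∈ P, f j = f k → j = k := fun j hj k hk h =>
    hP j hj k hk (S.trans (hf j hj) (h ▸ S.symm (hf k hk)))
  -- the involution exchanging `j` and `f j` for all `j` in `P`
  let g : Fin n → Fin n := fun k =>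
    if k ∈ P then f k else if h : ∃ j ∈ P, f j = k then h.choose else k
  have g1 : ∀ k ∈ P, g k = f k := fun k hk => if_pos hk
  have g2 : ∀ j ∈ P, f j ∉ P → g (f j) = j := by
    intro j hj hn
    have h : ∃ i ∈ P, f i = f j := ⟨j, hj, rfl⟩
    have : g (f j) = h.choose := by simp only [g, if_neg hn, dif_pos h]
    rw [this]
    exact hinj _ h.choose_spec.1 _ hj h.choose_spec.2
  have g3 : ∀ k, k ∉ P → (¬ ∃ j ∈ P, f j = k) → g k = k := by
    intro k hk hn
    simp only [g, if_neg hk, dif_neg hn]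
  have hgg : Function.Involutive g := by
    intro k
    by_cases hk : k ∈ P
    · rw [g1 k hk]
      by_cases hfk : f k ∈ P
      · have : k = f k := hP k hk _ hfk (hf k hk)
        rw [g1 _ hfk, ← this, ← this]
      · exact g2 k hk hfk
    · by_cases h : ∃ j ∈ P, f j = k
      · obtain ⟨j, hj, rfl⟩ := h
        rw [g2 j hj hk, g1 j hj]
      · rw [g3 k hk h, g3 k hk h]
  refine ⟨hgg.toPerm, fun k => ?_, fun j hj => g1 j hj⟩
  show S k (g k)
  by_cases hk : k ∈ P
  · rw [g1 k hk]; exact hf k hk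
  · by_cases h : ∃ j ∈ P, f j = k
    · obtain ⟨j, hj, rfl⟩ := h
      rw [g2 j hj hk]
      exact S.symm (hf j hj)
    · rw [g3 k hk h]

theorem class_mem {n : ℕ} (S : Setoid (Fin n)) (H : Subgroup (Perm (Fin n)))
    (h : ∀ i j, S i j → swap i j ∈ H) (κ : Perm (Fin n)) (hκ : ∀ k, S k (κ k)) : κ ∈ H := by
  have hle : Subgroup.closure {τ | ∃ i j, i ≠ j ∧ S i j ∧ τ = swap i j} ≤ H := by
    rw [Subgroup.closure_le]
    rintro _ ⟨i, j, _, hij, rfl⟩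
    exact h i j hij
  apply hle
  rw [mem_closure_isSwap]
  · refine ⟨Set.toFinite _, fun x => ?_⟩
    by_cases hx : x = κ x
    · rw [← hx]; exact MulAction.mem_orbit_self _
    · exact ⟨⟨swap x (κ x), Subgroup.subset_closure ⟨x, κ x, hx, hκ x, rfl⟩⟩, swap_apply_left _ _⟩
  · rintro _ ⟨i, j, hij, _, rfl⟩
    exact ⟨i, j, hij, rfl⟩

namespace RookSys

section
variable {n : ℕ} {M : Type*} [Monoid M] (D : RookSys n M)

theorem tM_absorb_φ {X : M} (κ : Perm (Fin n))
    (hκ : ∀ k, D.ab X (some k) (some (κ k))) : X * D.φ κ = X := by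
  let H : Subgroup (Perm (Fin n)) :=
    { carrier := {κ | X * D.φ κ = X}
      one_mem' := by simp
      mul_mem' := by
        intro σ τ (h1 : _ = _) (h2 : _ = _)
        show _ = _
        rw [map_mul, ← mul_assoc, h1, h2]
      inv_mem' := by
        intro σ (h1 : _ = _)
        show _ = _
        apply phi_cancel D.φ σ
        rw [mul_assoc, ← map_mul, inv_mul_cancel, map_one, mul_one, h1] }
  refine class_mem ((D.ab X).comap some) H (fun i j hij => ?_) κ hκ
  have hij : X * D.t (some i) (some j) = X := hij
  show _ = _
  rw [← hij, mul_assoc, D.tφ]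

theorem φ_absorb {Y : M} (S : Setoid (Fin n)) (h : ∀ i j, S i j → D.φ (swap i j) * Y = Y)
    (κ : Perm (Fin n)) (hκ : ∀ k, S k (κ k)) : D.φ κ * Y = Y := by
  let H : Subgroup (Perm (Fin n)) :=
    { carrier := {κ | D.φ κ * Y = Y}
      one_mem' := by simp
      mul_mem' := by
        intro σ τ (h1 : _ = _) (h2 : _ = _)
        show _ = _
        rw [map_mul, mul_assoc, h2, h1]
      inv_mem' := by
        intro σ (h1 : _ = _)
        show D.φ σ⁻¹ * Y = Y
        conv_lhs => rw [← h1]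
        rw [← mul_assoc, ← map_mul, inv_mul_cancel, map_one, one_mul] }
  exact class_mem S H h κ hκ

theorem tM_φ_absorb {Y : M} (hY : Y ∈ D.tM) (κ : Perm (Fin n))
    (hκ : ∀ k, D.ab Y (some k) (some (κ k))) : D.φ κ * Y = Y := by
  refine D.φ_absorb ((D.ab Y).comap some) (fun i j hij => ?_) κ hκ
  have hij : Y * D.t (some i) (some j) = Y := hij
  rw [← hij, D.tM_comm hY, ← mul_assoc, D.φ_mul_t]

theorem eM_φ_absorb {W : M} (hW : W ∈ D.eM) (κ : Perm (Fin n))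
    (hκ : ∀ k, k ∉ D.supp W → κ k = k) : D.φ κ * W = W := by
  let S : Setoid (Fin n) :=
    { r := fun i j => i = j ∨ (i ∈ D.supp W ∧ j ∈ D.supp W)
      iseqv :=
        { refl := fun i => Or.inl rfl
          symm := by rintro i j (h | h); exacts [Or.inl h.symm, Or.inr ⟨h.2, h.1⟩]
          trans := by
            rintro i j k (rfl | h) (rfl | h')
            exacts [Or.inl rfl, Or.inr h', Or.inr h, Or.inr ⟨h.1, h'.2⟩] } }
  refine D.φ_absorb S (fun i j hij => ?_) κ (fun k => ?_)
  · rcases eq_or_ne i j with rfl | hne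
    · rw [swap_self, ← Perm.one_def, map_one, one_mul]
    · obtain ⟨h1, h2⟩ := Or.resolve_left hij hne
      have h1 : W * D.e i = W := h1
      have h2 : W * D.e j = W := h2
      rw [← h2, D.eM_comm hW, ← h1, D.eM_comm hW, ← mul_assoc (D.e j), D.e_comm j i,
        ← mul_assoc (D.φ _), D.φ_mul_ee i j hne]
  · by_cases hk : k ∈ D.supp W
    · refine Or.inr ⟨hk, ?_⟩
      by_contra hk'
      rw [κ.injective (hκ _ hk')] at hk'
      exact hk' hk
    · exact Or.inl (hκ k hk).symm

/-- Two forms with the same outer factors agree if their middle parts match up to permutations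
preserving the classes of the outer factors. -/
theorem form_eq {X W W' Y : M} {σ σ' : Perm (Fin n)} (hW : W ∈ D.eM)
    (hW' : W' ∈ D.eM) (hY : Y ∈ D.tM) (hr : D.Reduced X σ W Y) (hr' : D.Reduced X σ' W' Y)
    (h : ∀ j ∉ D.supp W, ∃ k ∉ D.supp W', D.ab X (some (σ j)) (some (σ' k)) ∧
      D.ab Y (some j) (some k))
    (h' : ∀ j ∉ D.supp W', ∃ k ∉ D.supp W, D.ab Y (some j) (some k)) :
    X * D.φ σ * W * Y = X * D.φ σ' * W' * Y := by
  choose! f hf1 hf2 hf3 using h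
  obtain ⟨κ, hκ1, hκ2⟩ := class_perm ((D.ab Y).comap some) (D.supp W)ᶜ f hf3 (by
    intro j hj k hk hjk
    by_contra hne
    exact (hr j (some k) hj (fun i hi h => hk (Option.some_injective _ h ▸ hi))
      (fun h => hne (Option.some_injective _ h).symm)).1 hjk)
  obtain ⟨μ, hμ1, hμ2⟩ := class_perm ((D.ab X).comap some) (σ '' (D.supp W)ᶜ)
    (fun x => σ' (f (σ⁻¹ x))) (by
      rintro _ ⟨j, hj, rfl⟩
      rw [Equiv.Perm.inv_def, Equiv.symm_apply_apply]
      exact hf2 j hj) (by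
      rintro _ ⟨j, hj, rfl⟩ _ ⟨k, hk, rfl⟩ hjk
      by_contra hne
      exact (hr j (some k) hj (fun i hi h => hk (Option.some_injective _ h ▸ hi))
        (fun h => hne (congrArg σ (Option.some_injective _ h).symm))).2 hjk)
  have eX : X * D.φ μ = X := D.tM_absorb_φ μ hμ1
  have eY : D.φ κ⁻¹ * Y = Y := D.tM_φ_absorb hY κ⁻¹ fun k => by
    have := hκ1 (κ⁻¹ k)
    rw [Equiv.Perm.inv_def, Equiv.apply_symm_apply] at this
    exact (D.ab Y).symm this
  -- `κ` maps the complement of the support of `W` onto that of `W'`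
  have hsupp : ∀ i, i ∉ D.supp W' ↔ κ⁻¹ i ∉ D.supp W := by
    intro i
    constructor
    · intro hi
      obtain ⟨j, hj, hij⟩ := h' i hi
      have hfj : f j = i := by
        by_contra hne
        exact (hr' i (some (f j)) hi (fun l hl h => hf1 j hj (Option.some_injective _ h ▸ hl))
          (fun h => hne (Option.some_injective _ h))).1 ((D.ab Y).trans hij (hf3 j hj))
      rw [← hfj, ← hκ2 j hj, Equiv.Perm.inv_def, Equiv.symm_apply_apply]
      exact hj
    · intro hi
      have := hf1 _ hi
      rwa [← hκ2 _ hi, Equiv.Perm.inv_def, Equiv.apply_symm_apply] at this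
  obtain ⟨V, hV, e2⟩ := D.eM_φ κ⁻¹ hW
  have hVW : V = W' := by
    refine D.eM_eq hV hW' fun i => ?_
    have h1 : V * D.e i = V ↔ W * D.e (κ⁻¹ i) = W := by
      constructor
      · intro h
        apply phi_cancel D.φ κ⁻¹
        rw [mul_assoc, ← D.φ_e, ← mul_assoc, e2, mul_assoc, h]
      · intro h
        have h3 : D.φ κ⁻¹ * (V * D.e i) = D.φ κ⁻¹ * V := by
          rw [← mul_assoc, ← e2, mul_assoc, D.φ_e, ← mul_assoc, h]
        have := congrArg (D.φ κ * ·) h3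
        simpa only [← mul_assoc, ← map_mul, mul_inv_cancel, map_one, one_mul] using this
    exact h1.trans (not_iff_not.1 (hsupp i)).symm
  have e3 : D.φ (σ'⁻¹ * μ * σ * κ⁻¹) * W' = W' := by
    refine D.eM_φ_absorb hW' _ fun i hi => ?_
    have hi' := (hsupp i).1 hi
    have h5 : i = f (κ⁻¹ i) := by rw [← hκ2 _ hi', Equiv.Perm.inv_def, Equiv.apply_symm_apply]
    rw [Perm.mul_apply, Perm.mul_apply, Perm.mul_apply, hμ2 _ ⟨_, hi', rfl⟩, Equiv.Perm.inv_def, Equiv.symm_apply_apply,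
      Equiv.Perm.inv_def, Equiv.symm_apply_apply, ← h5]
  calc X * D.φ σ * W * Y = X * D.φ μ * D.φ σ * (W * D.φ κ⁻¹) * Y := by
        rw [eX]; simp only [mul_assoc, eY]
    _ = X * (D.φ μ * D.φ σ * D.φ κ⁻¹) * W' * Y := by
        rw [e2, hVW]; simp only [mul_assoc]
    _ = X * (D.φ σ' * (D.φ (σ'⁻¹ * μ * σ * κ⁻¹) * W')) * Y := by
        rw [← mul_assoc (D.φ σ'), ← map_mul, ← map_mul, ← map_mul]
        simp only [mul_assoc, mul_inv_cancel_left]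
    _ = _ := by rw [e3]; simp only [mul_assoc]

end

section Sem
variable {n : ℕ} {M : Type*} [Monoid M] (D : RookSys n M) (ev : M →* BRel n)
  (hφ : ∀ σ, ev (D.φ σ) = pR σ) (he : ∀ i, ev (D.e i) = eR i) (ht : ∀ p q, ev (D.t p q) = tR p q)

include ht in
theorem sem_t {X : M} (hX : X ∈ D.tM) (x y) : ev X x y ↔ y = x ∧ Resp (D.ab X) x := by
  have h1 : ∀ x y, ev X x y → y = x := by
    induction hX using Submonoid.closure_induction with
    | mem X h => obtain ⟨pq, rfl⟩ := h; intro x y h; rw [ht] at h; exact h.1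
    | one => intro x y h; rw [map_one] at h; exact h
    | mul X Y _ _ h1 h2 =>
      rintro x y h
      rw [map_mul] at h
      obtain ⟨z, hz, hz'⟩ := h
      rw [h2 _ _ hz', h1 _ _ hz]
  constructor
  · intro h
    obtain rfl := h1 x y h
    refine ⟨rfl, fun p q (hpq : _ = _) => ?_⟩
    rw [← hpq, map_mul, ht, mul_tR_iff] at h
    exact h.2
  · rintro ⟨rfl, h⟩
    have key : ∀ Z ∈ Submonoid.closure
        ((fun pq : Option (Fin n) × Option (Fin n) => D.t pq.1 pq.2) ''
          {pq | X * D.t pq.1 pq.2 = X}), ev Z y y := by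
      intro Z hZ
      induction hZ using Submonoid.closure_induction with
      | mem Z hZ => obtain ⟨pq, hpq, rfl⟩ := hZ; rw [ht]; exact ⟨rfl, h _ _ hpq⟩
      | one => rw [map_one]; rfl
      | mul x y _ _ h1 h2 => rw [map_mul]; exact ⟨_, h1, h2⟩
    exact key X (gen_mem (fun _ _ => D.t_comm _ _ _ _) (fun _ => D.t_idem _ _) hX)

include he in
theorem sem_e {W : M} (hW : W ∈ D.eM) (x y) : ev W x y ↔ ∀ j ∉ D.supp W, y j = x j := by
  classical
  constructor
  · intro h j hj
    have key : ∀ Z ∈ Submonoid.closure (D.e '' {i | W * D.e i = W}), ∀ x y, ev Z x y →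
        y j = x j := by
      intro Z hZ
      induction hZ using Submonoid.closure_induction with
      | mem Z hZ =>
        obtain ⟨i, hi, rfl⟩ := hZ
        intro x y h
        rw [he] at h
        obtain ⟨b, rfl⟩ := h
        exact Function.update_of_ne (fun h => hj (by rw [h]; exact hi)) _ _
      | one => intro x y h; rw [map_one] at h; rw [show y = x from h]
      | mul X Y _ _ h1 h2 =>
        intro x y h
        rw [map_mul] at h
        obtain ⟨z, hz, hz'⟩ := h
        rw [h2 _ _ hz', h1 _ _ hz]
    exact key W (gen_mem D.e_comm D.e_idem hW) x y h
  · intro h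
    have h0 : ev W x x := by
      clear h
      induction hW using Submonoid.closure_induction with
      | mem Z hZ =>
        obtain ⟨i, rfl⟩ := hZ
        rw [he]
        exact ⟨x i, (Function.update_eq_self _ _).symm⟩
      | one => rw [map_one]; rfl
      | mul X Y _ _ h1 h2 => rw [map_mul]; exact ⟨x, h1, h2⟩
    -- the coordinates in the support can be changed one after another
    have key : ∀ A : Finset (Fin n), (∀ j ∈ A, j ∈ D.supp W) → ev W x (A.piecewise y x) := by
      intro A
      induction A using Finset.induction_on with
      | empty => intro _; rw [Finset.piecewise_empty]; exact h0
      | insert j A hj ih =>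
        intro hA
        have hj : W * D.e j = W := hA j (Finset.mem_insert_self _ _)
        rw [Finset.piecewise_insert, ← hj, map_mul, he]
        exact ⟨_, ih fun k hk => hA k (Finset.mem_insert_of_mem hk), _, rfl⟩
    have := key (Finset.univ.filter (· ∈ D.supp W)) (by simp)
    convert this using 1
    funext j
    by_cases hj : j ∈ D.supp W
    · rw [Finset.piecewise_eq_of_mem _ _ _ (by simpa using hj)]
    · rw [Finset.piecewise_eq_of_notMem _ _ _ (by simpa using hj), h j hj]

include hφ he ht in
/-- The relation of a form: `x` respects the classes of `X`, `y` those of `Y`, and `y = x ∘ σ` outside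
the support of `W`. -/
theorem sem_form {X W Y : M} {σ : Perm (Fin n)} (hX : X ∈ D.tM) (hW : W ∈ D.eM) (hY : Y ∈ D.tM)
    (x y) : ev (X * D.φ σ * W * Y) x y ↔
      Resp (D.ab X) x ∧ Resp (D.ab Y) y ∧ ∀ j ∉ D.supp W, y j = x (σ j) := by
  rw [map_mul, map_mul, map_mul, hφ]
  constructor
  · rintro ⟨z, ⟨w, ⟨v, h1, h2⟩, h3⟩, h4⟩
    obtain ⟨rfl, h1⟩ := (D.sem_t ev ht hX _ _).1 h1
    obtain ⟨rfl, h4⟩ := (D.sem_t ev ht hY _ _).1 h4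
    obtain rfl : w = _ := h2
    exact ⟨h1, h4, (D.sem_e ev he hW _ _).1 h3⟩
  · rintro ⟨h1, h2, h3⟩
    exact ⟨y, ⟨x ∘ σ, ⟨x, (D.sem_t ev ht hX _ _).2 ⟨rfl, h1⟩, rfl⟩,
      (D.sem_e ev he hW _ _).2 h3⟩, (D.sem_t ev ht hY _ _).2 ⟨rfl, h2⟩⟩

include hφ he ht in
/-- Every respecting colouring of the upper row extends to the lower row. -/
theorem extend_right {X W Y : M} {σ : Perm (Fin n)} (hX : X ∈ D.tM) (hW : W ∈ D.eM)
    (hY : Y ∈ D.tM) (hr : D.Reduced X σ W Y) (x) (hx : Resp (D.ab X) x) :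
    ∃ y, ev (X * D.φ σ * W * Y) x y ∧
      ∀ k, y k = true → ∃ j ∉ D.supp W, D.ab Y (some k) (some j) ∧ x (σ j) = true := by
  classical
  obtain ⟨y, hy⟩ : ∃ y : Fin n → Bool, ∀ p, xt y p = true ↔
      ∃ j ∉ D.supp W, D.ab Y p (some j) ∧ x (σ j) = true := by
    refine ⟨fun k => decide (∃ j ∉ D.supp W, D.ab Y (some k) (some j) ∧ x (σ j) = true), ?_⟩
    rintro (_ | k)
    · simp only [xt_none, Bool.false_eq_true, false_iff]
      rintro ⟨j, hj, h, _⟩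
      exact (hr j none hj (by simp) (by simp)).1 ((D.ab Y).symm h)
    · simp
  refine ⟨y, (D.sem_form ev hφ he ht hX hW hY _ _).2 ⟨hx, fun p q hpq => ?_, fun j hj => ?_⟩,
    fun k hk => (hy (some k)).1 hk⟩
  · rw [Bool.eq_iff_iff, hy, hy]
    exact ⟨fun ⟨j, hj, h1, h2⟩ => ⟨j, hj, (D.ab Y).trans ((D.ab Y).symm hpq) h1, h2⟩,
      fun ⟨j, hj, h1, h2⟩ => ⟨j, hj, (D.ab Y).trans hpq h1, h2⟩⟩
  · rw [← xt_some y, Bool.eq_iff_iff, hy]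
    refine ⟨?_, fun h => ⟨j, hj, (D.ab Y).refl _, h⟩⟩
    rintro ⟨k, hk, h1, h2⟩
    by_cases hjk : k = j
    · rwa [← hjk]
    · exact absurd h1 (hr j (some k) hj (fun i hi h => hk (Option.some_injective _ h ▸ hi))
        (fun h => hjk (Option.some_injective _ h))).1

include hφ he ht in
theorem extend_left {X W Y : M} {σ : Perm (Fin n)} (hX : X ∈ D.tM) (hW : W ∈ D.eM)
    (hY : Y ∈ D.tM) (hr : D.Reduced X σ W Y) (y) (hy : Resp (D.ab Y) y) :
    ∃ x, ev (X * D.φ σ * W * Y) x y := by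
  classical
  obtain ⟨x, hx⟩ : ∃ x : Fin n → Bool, ∀ p, xt x p = true ↔
      ∃ j ∉ D.supp W, D.ab X p (some (σ j)) ∧ y j = true := by
    refine ⟨fun k => decide (∃ j ∉ D.supp W, D.ab X (some k) (some (σ j)) ∧ y j = true), ?_⟩
    rintro (_ | k)
    · simp only [xt_none, Bool.false_eq_true, false_iff]
      rintro ⟨j, hj, h, _⟩
      exact (hr j none hj (by simp) (by simp)).2 ((D.ab X).symm h)
    · simp
  refine ⟨x, (D.sem_form ev hφ he ht hX hW hY _ _).2 ⟨fun p q hpq => ?_, hy, fun j hj => ?_⟩⟩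
  · rw [Bool.eq_iff_iff, hx, hx]
    exact ⟨fun ⟨j, hj, h1, h2⟩ => ⟨j, hj, (D.ab X).trans ((D.ab X).symm hpq) h1, h2⟩,
      fun ⟨j, hj, h1, h2⟩ => ⟨j, hj, (D.ab X).trans hpq h1, h2⟩⟩
  · rw [← xt_some x (σ j), Bool.eq_iff_iff, hx]
    refine ⟨fun h => ⟨j, hj, (D.ab X).refl _, h⟩, ?_⟩
    rintro ⟨k, hk, h1, h2⟩
    by_cases hjk : k = j
    · rwa [← hjk]
    · exact absurd h1 (hr j (some k) hj (fun i hi h => hk (Option.some_injective _ h ▸ hi))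
        (fun h => hjk (Option.some_injective _ h))).2

include hφ he ht in
/-- Two reduced forms with the same outer factors and the same relation have matching middle parts: each
`j` outside the support of `W` corresponds to some `k` outside that of `W'`, equivalent to it for `Y`
and, after applying `σ` and `σ'`, for `X`. To find `k`, colour only the class of `σ j`. -/
theorem link {X W W' Y : M} {σ σ' : Perm (Fin n)} (hX : X ∈ D.tM) (hW : W ∈ D.eM)
    (hW' : W' ∈ D.eM) (hY : Y ∈ D.tM) (hr : D.Reduced X σ W Y) (hr' : D.Reduced X σ' W' Y)
    (h : ev (X * D.φ σ * W * Y) = ev (X * D.φ σ' * W' * Y)) (j) (hj : j ∉ D.supp W) :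
    ∃ k ∉ D.supp W', D.ab X (some (σ j)) (some (σ' k)) ∧ D.ab Y (some j) (some k) := by
  obtain ⟨x, hx, hx'⟩ := resp_class (D.ab X) (σ j) (hr j none hj (by simp) (by simp)).2
  obtain ⟨y, hy, hy'⟩ := D.extend_right ev hφ he ht hX hW' hY hr' x hx
  rw [← h, D.sem_form ev hφ he ht hX hW hY] at hy
  obtain ⟨k, hk, h1, h2⟩ := hy' j (by
    rw [hy.2.2 j hj]
    exact (hx' (some (σ j))).2 ((D.ab X).refl _))
  exact ⟨k, hk, (D.ab X).symm ((hx' (some (σ' k))).1 h2), h1⟩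

include hφ he ht in
/-- Elements admitting a normal form are determined by the corresponding relation. -/
theorem form_inj {a b : M} (ha : D.IsForm a) (hb : D.IsForm b) (h : ev a = ev b) : a = b := by
  obtain ⟨X, hX, σ, W, hW, Y, hY, rfl, hr⟩ := D.exists_reduced ha
  obtain ⟨X', hX', σ', W', hW', Y', hY', rfl, hr'⟩ := D.exists_reduced hb
  have hRX : ∀ x, Resp (D.ab X) x ↔ Resp (D.ab X') x := by
    intro x
    constructor
    · intro hx
      obtain ⟨y, hy, -⟩ := D.extend_right ev hφ he ht hX hW hY hr x hx
      rw [h, D.sem_form ev hφ he ht hX' hW' hY'] at hy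
      exact hy.1
    · intro hx
      obtain ⟨y, hy, -⟩ := D.extend_right ev hφ he ht hX' hW' hY' hr' x hx
      rw [← h, D.sem_form ev hφ he ht hX hW hY] at hy
      exact hy.1
  have hRY : ∀ y, Resp (D.ab Y) y ↔ Resp (D.ab Y') y := by
    intro y
    constructor
    · intro hy
      obtain ⟨x, hx⟩ := D.extend_left ev hφ he ht hX hW hY hr y hy
      rw [h, D.sem_form ev hφ he ht hX' hW' hY'] at hx
      exact hx.2.1
    · intro hy
      obtain ⟨x, hx⟩ := D.extend_left ev hφ he ht hX' hW' hY' hr' y hy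
      rw [← h, D.sem_form ev hφ he ht hX hW hY] at hx
      exact hx.2.1
  obtain rfl : X = X' := D.tM_eq hX hX' fun p q => by
    show D.ab X p q ↔ D.ab X' p q
    simp only [rel_iff_resp, hRX]
  obtain rfl : Y = Y' := D.tM_eq hY hY' fun p q => by
    show D.ab Y p q ↔ D.ab Y' p q
    simp only [rel_iff_resp, hRY]
  refine D.form_eq hW hW' hY hr hr' (D.link ev hφ he ht hX hW hW' hY hr hr' h) fun j hj => ?_
  obtain ⟨k, hk, -, h2⟩ := D.link ev hφ he ht hX hW' hW hY hr' hr h.symm j hj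
  exact ⟨k, hk, h2⟩

end Sem

end RookSys

/-! ### Every rook partition is a product of generators -/

section Generation

variable {n : ℕ} (S : Submonoid (BRel n))

variable {S} in
theorem mem_of_iff {R R' : BRel n} (h : R ∈ S) (h' : ∀ x y, R' x y ↔ R x y) : R' ∈ S := by
  rw [BRel.ext h']
  exact h

/-- The restriction to colourings which agree at each pair in `A`. -/
def pairR (A : Finset (Option (Fin n) × Option (Fin n))) : BRel n :=
  fun x y => y = x ∧ ∀ pq ∈ A, xt x pq.1 = xt x pq.2

theorem pairR_mem (ht : ∀ p q, tR p q ∈ S) (A : Finset (Option (Fin n) × Option (Fin n))) :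
    pairR A ∈ S := by
  classical
  induction A using Finset.induction_on with
  | empty =>
    exact mem_of_iff S.one_mem fun x y => by simp [BRel.one_apply, pairR]
  | insert pq A h ih =>
    refine mem_of_iff (S.mul_mem (ht pq.1 pq.2) ih) fun x y => ?_
    rw [tR_mul_iff, pairR, pairR, Finset.forall_mem_insert]
    exact ⟨fun ⟨h1, h2, h3⟩ => ⟨h2, h1, h3⟩, fun ⟨h2, h1, h3⟩ => ⟨h1, h2, h3⟩⟩

/-- The restriction to colourings which are constant along `r` and `false` at its points of
irreflexivity. -/
def resR (r : Fin n → Fin n → Prop) : BRel n :=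
  fun x y => y = x ∧ (∀ i j, r i j → x i = x j) ∧ ∀ i, ¬ r i i → x i = false

theorem resR_mem (ht : ∀ p q, tR p q ∈ S) (r : Fin n → Fin n → Prop) : resR r ∈ S := by
  classical
  refine mem_of_iff (pairR_mem S ht (Finset.univ.filter fun pq =>
    (∃ i j, pq = (some i, some j) ∧ r i j) ∨ ∃ i, pq = (some i, none) ∧ ¬ r i i))
    fun x y => and_congr_right fun _ => ⟨?_, fun h => ⟨fun i j hij => ?_,
    fun i hi => ?_⟩⟩
  · rintro ⟨h1, h2⟩ pq hpq
    rcases (Finset.mem_filter.1 hpq).2 with ⟨i, j, rfl, h⟩ | ⟨i, rfl, h⟩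
    · exact h1 i j h
    · exact h2 i h
  · exact h (some i, some j) (Finset.mem_filter.2 ⟨Finset.mem_univ _, Or.inl ⟨i, j, rfl, hij⟩⟩)
  · exact h (some i, none) (Finset.mem_filter.2 ⟨Finset.mem_univ _, Or.inr ⟨i, rfl, hi⟩⟩)

/-- The relation of agreement on `J`. -/
def agrR (J : Set (Fin n)) : BRel n := fun x y => ∀ j ∈ J, y j = x j

theorem agrR_mem (he : ∀ i, eR i ∈ S) (J : Set (Fin n)) : agrR J ∈ S := by
  classical
  have key : ∀ A : Finset (Fin n), agrR {j | j ∉ A} ∈ S := by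
    intro A
    induction A using Finset.induction_on with
    | empty =>
      exact mem_of_iff S.one_mem fun x y => by simp [BRel.one_apply, agrR, funext_iff]
    | insert i A h ih =>
      refine mem_of_iff (S.mul_mem (he i) ih) fun x y => ?_
      rw [eR_mul_iff]
      constructor
      · intro hxy
        refine ⟨y i, fun j hj => ?_⟩
        rcases eq_or_ne j i with rfl | hji
        · simp
        · rw [Function.update_of_ne hji]
          exact hxy j fun h => (Finset.mem_insert.1 h).elim hji hj
      · rintro ⟨b, hb⟩ j hj
        rw [hb j fun h => hj (Finset.mem_insert_of_mem h),
          Function.update_of_ne fun h => hj (by rw [h]; exact Finset.mem_insert_self _ _)]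
  convert key (Finset.univ.filter (· ∉ J)) using 2
  ext j
  simp

/-- The relation of `α` is the product of the restriction given by the upper row, a permutation
matching one lower point of each transversal block with an upper point of the same block, the
relation forgetting all colours outside the chosen lower points, and the restriction given by the
lower row. -/
theorem nu_mem (hp : ∀ σ, pR σ ∈ S) (he : ∀ i, eR i ∈ S) (ht : ∀ p q, tR p q ∈ S) (α : RP n) :
    nu α ∈ S := by
  classical
  -- the chosen lower point in the block of a lower point
  let rep : Fin n → Fin n := fun k =>
    @Classical.epsilon _ ⟨k⟩ fun j => α.rel (Sum.inr j) (Sum.inr k)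
  have rep_rel : ∀ k, α.rel (Sum.inr k) (Sum.inr k) → α.rel (Sum.inr (rep k)) (Sum.inr k) :=
    fun k hk => @Classical.epsilon_spec_aux _ ⟨k⟩
      (fun j => α.rel (Sum.inr j) (Sum.inr k)) ⟨k, hk⟩
  have rep_eq : ∀ j k, α.rel (Sum.inr j) (Sum.inr k) → rep j = rep k := by
    intro j k h
    have : (fun i => α.rel (Sum.inr i) (Sum.inr j)) = fun i => α.rel (Sum.inr i) (Sum.inr k) :=
      funext fun i => propext ⟨fun h' => α.trans h' h, fun h' => α.trans h' (α.symm h)⟩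
    simp only [rep, this]
  let J : Set (Fin n) := {j | (∃ i, α.rel (Sum.inl i) (Sum.inr j)) ∧ rep j = j}
  obtain ⟨f, hf⟩ : ∃ f : Fin n → Fin n, ∀ j ∈ J, α.rel (Sum.inl (f j)) (Sum.inr j) := by
    have : ∀ j, ∃ i, j ∈ J → α.rel (Sum.inl i) (Sum.inr j) := by
      intro j
      by_cases hj : j ∈ J
      · obtain ⟨i, hi⟩ := hj.1
        exact ⟨i, fun _ => hi⟩
      · exact ⟨j, fun h => absurd h hj⟩
    choose f hf using this
    exact ⟨f, hf⟩
  have hinj : Set.InjOn f J := by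
    intro j hj k hk hjk
    rw [← hj.2, ← hk.2]
    exact rep_eq j k (α.trans (α.symm (hf j hj)) (hjk ▸ hf k hk))
  obtain ⟨σ, hσ⟩ : ∃ σ : Perm (Fin n), ∀ j ∈ J, σ j = f j :=
    ⟨(Equiv.Set.imageOfInjOn f J hinj).extendSubtype, fun j hj =>
      Equiv.extendSubtype_apply_of_mem _ _ hj⟩
  have hσf : ∀ j ∈ J, α.rel (Sum.inl (σ j)) (Sum.inr j) := fun j hj => by
    rw [hσ j hj]; exact hf j hj
  refine mem_of_iff (S.mul_mem (S.mul_mem (S.mul_mem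
    (resR_mem S ht fun i j => α.rel (Sum.inl i) (Sum.inl j)) (hp σ)) (agrR_mem S he J))
    (resR_mem S ht fun i j => α.rel (Sum.inr i) (Sum.inr j)))
    fun x y => ⟨fun h => ?_, ?_⟩
  · exact ⟨y, ⟨x ∘ σ, ⟨x, ⟨rfl, fun i j hij => h.1 _ _ hij, fun i hi => h.2 _ hi⟩, rfl⟩,
      fun j hj => (h.1 _ _ (hσf j hj)).symm⟩, rfl, fun i j hij => h.1 _ _ hij,
      fun i hi => h.2 _ hi⟩
  · rintro ⟨_, ⟨_, ⟨x, ⟨rfl, h1, h2⟩, rfl⟩, h3⟩, rfl, h4, h5⟩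
    have key : ∀ i k, α.rel (Sum.inl i) (Sum.inr k) → x i = y k := by
      intro i k hik
      have hr := rep_rel k (α.trans (α.symm hik) hik)
      have hJ : rep k ∈ J := ⟨⟨i, α.trans hik (α.symm hr)⟩, rep_eq _ _ hr⟩
      rw [← h4 _ _ hr, h3 _ hJ]
      exact h1 _ _ (α.trans hik (α.symm (α.trans (hσf _ hJ) hr)))
    refine ⟨?_, ?_⟩
    · rintro (i | i) (k | k) h
      · exact h1 _ _ h
      · exact key _ _ h
      · exact (key _ _ (α.symm h)).symm
      · exact h4 _ _ h
    · rintro (i | i) h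
      · exact h2 _ h
      · exact h5 _ h

end Generation

/-! ### The presented monoid -/

/-- A homomorphism to relations which has the prescribed values on the letters has the expected
values on all extended generators. -/
theorem ev_gens {m : ℕ} {M : Type*} [Monoid M] (D : RookSys (m + 1) M) (ev : M →* BRel (m + 1))
    (h : ∀ a, ev (D.letter a) = letR a) :
    (∀ σ, ev (D.φ σ) = pR σ) ∧ (∀ i, ev (D.e i) = eR i) ∧ ∀ p q, ev (D.t p q) = tR p q := by
  have hφ : ∀ σ, ev (D.φ σ) = pR σ :=
    perm_mem_of_adj (MonoidHom.eqLocusM (ev.comp D.φ) (pHom (m + 1))) fun i => h (.s i)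
  have ho : ∀ i, ev (D.t none (some i)) = tR none (some i) := fun i => h (.o i)
  refine ⟨hφ, fun i => h (.e i), ?_⟩
  rintro (_ | i) (_ | j)
  · rw [D.t_self, map_one, ← (bSys (m + 1)).t_self none]; rfl
  · exact ho j
  · rw [D.t_symm, ho, show tR (some i) none = tR none (some i) from (bSys (m + 1)).t_symm _ _]
  · rcases eq_or_ne i j with rfl | hij
    · rw [D.t_self, map_one, ← (bSys (m + 1)).t_self (some i)]; rfl
    · obtain ⟨k, σ, rfl, rfl⟩ := pick2 i j hij
      have h1 := congrArg ev (D.φ_t σ (some (lo k)) (some (hi k)))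
      rw [map_mul, map_mul, hφ, show ev (D.t (some (lo k)) (some (hi k))) = _ from h (.q k)] at h1
      exact phi_cancel (pHom (m + 1)) σ
        (h1.symm.trans ((bSys (m + 1)).φ_t σ (some (lo k)) (some (hi k))))

/-- The congruence generated by the relations, on the free monoid. -/
def seqoCon (n : ℕ) : Con (FreeMonoid (SEQO n)) where
  r u v := CongGen (RelSEQO n) u.toList v.toList
  iseqv := ⟨fun _ => .refl _, .symm, .trans⟩
  mul' h1 h2 := CongGen.mul h1 h2

/-- The class of a word in the presented monoid. -/
def cls {n : ℕ} (w : List (SEQO n)) : (seqoCon n).Quotient :=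
  ((FreeMonoid.ofList w : FreeMonoid (SEQO n)) : (seqoCon n).Quotient)

theorem cls_eq {n : ℕ} {u v : List (SEQO n)} : cls u = cls v ↔ CongGen (RelSEQO n) u v :=
  (seqoCon n).eq

theorem cls_prod {n : ℕ} (w : List (SEQO n)) : (w.map fun a => cls [a]).prod = cls w := by
  induction w with
  | nil => rfl
  | cons a w ih => rw [List.map_cons, List.prod_cons, ih]; rfl

theorem letR_prod_eq {n : ℕ} {u v : List (SEQO n)} (h : CongGen (RelSEQO n) u v) :
    (u.map letR).prod = (v.map letR).prod := by
  induction h with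
  | rel h => rw [← bSys_letter]; exact (bSys n).letter_rel h
  | refl => rfl
  | symm _ ih => exact ih.symm
  | trans _ _ ih1 ih2 => exact ih1.trans ih2
  | mul _ _ ih1 ih2 => rw [List.map_append, List.map_append, List.prod_append, List.prod_append,
      ih1, ih2]

/-- The presented monoid acts by relations on colourings. -/
def clsHom (n : ℕ) : (seqoCon n).Quotient →* BRel n :=
  (seqoCon n).lift (FreeMonoid.lift letR) fun u v h => by
    show FreeMonoid.lift letR u = FreeMonoid.lift letR v
    rw [FreeMonoid.lift_apply, FreeMonoid.lift_apply]
    exact letR_prod_eq h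

theorem clsHom_cls {n : ℕ} (w : List (SEQO n)) : clsHom n (cls w) = (w.map letR).prod :=
  FreeMonoid.lift_apply _ _

theorem isForm_cls {m : ℕ} (D : RookSys (m + 1) (seqoCon (m + 1)).Quotient)
    (hD : D.letter = fun a => cls [a]) (w : List (SEQO (m + 1))) : D.IsForm (cls w) := by
  rw [← cls_prod, ← hD]
  induction w using List.reverseRecOn with
  | nil => exact D.isForm_one
  | append_singleton w a ih =>
    rw [List.map_append, List.prod_append, List.map_singleton, List.prod_singleton]
    cases a
    · exact D.isForm_mul_φ ih _
    · exact D.isForm_mul_e ih _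
    · exact D.isForm_mul_t ih _ _
    · exact D.isForm_mul_t ih _ _

end Proof

/-- Theorem: presentation of `RP_n`: the monoid homomorphism
`Ψ : (S ∪ E ∪ Q ∪ O)* → RP_n` is surjective, and its kernel congruence is exactly the
congruence `≈` generated by (R18)–(R43). -/
theorem stmt16 (n : ℕ) (hn : 1 ≤ n) :
    (∀ α : RP n, ∃ w : List (SEQO n), PsiW w = α) ∧
    (∀ u v : List (SEQO n), PsiW u = PsiW v ↔ CongGen (RelSEQO n) u v) := by
  obtain ⟨m, rfl⟩ : ∃ m, n = m + 1 := ⟨n - 1, by omega⟩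
  obtain ⟨D, hD⟩ := exists_sys (fun a => cls (n := m + 1) [a]) fun u v h => by
    rw [cls_prod, cls_prod, cls_eq]
    exact .rel h
  obtain ⟨hφ, he, ht⟩ := ev_gens D (clsHom (m + 1)) fun a => by
    rw [hD, clsHom_cls, List.map_singleton, List.prod_singleton]
  refine ⟨fun α => ?_, fun u v => ⟨fun h => ?_, fun h => nu_injective ?_⟩⟩
  · obtain ⟨c, hc⟩ : nu α ∈ MonoidHom.mrange (clsHom (m + 1)) :=
      nu_mem (MonoidHom.mrange (clsHom (m + 1))) (fun σ => ⟨_, hφ σ⟩) (fun i => ⟨_, he i⟩) (fun p q => ⟨_, ht p q⟩) α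
    obtain ⟨w, rfl⟩ := Con.mk'_surjective c
    exact ⟨w.toList, nu_injective ((nu_PsiW _).trans ((clsHom_cls _).symm.trans hc))⟩
  · refine cls_eq.1 (D.form_inj (clsHom (m + 1)) hφ he ht (isForm_cls D hD u)
      (isForm_cls D hD v) ?_)
    rw [clsHom_cls, clsHom_cls, ← nu_PsiW, ← nu_PsiW, h]
  · rw [nu_PsiW, nu_PsiW, letR_prod_eq h]

end RookPaper
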